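/- Suppose C(x,y) = y₁·F(x₁,…,x_r) + Σ_{j=1}^{m} x_j q_j(y) + R(y), where F is a nonsingular positive definite integral quadratic form in r variables with 5 ≤ r ≤ m, and suppose that the polynomial y₁ divides q_i(y) in ℤ[y₁,…,y_h] for every 1 ≤ i ≤ r. Then there exist c > 0 and B₀ such that N(B) ≥ c · B^{r−2+(2/3)(n−r−1)} for all B ≥ B₀. -/

import Mathlib

open MvPolynomial

/-!
If `y₁` divides `q_i` for `i ≤ r`, then on a slice `y₁ = s` with `s ≠ 0` the equation `C = 0`,
divided by `s`, reads `F(u) + ∑ u_i l_i = N` in the variables `u = (x₁, …, x_r)`, where the `l_i`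
are linear forms and `-s N` is a cubic form `E` in `s` and the other `n - r - 1` variables `z`.

If `E(0, z₀) < 0` for some `z₀`, then `N` has order `Y³` for `z` in a box of side of order `Y`
around a multiple of `z₀`. Fixing `s` and restricting `z` to a suitable lattice coset keeps `N`
integral and in a fixed residue class and the `l_i` divisible enough that `F` can be diagonalised
and the square completed over `ℤ`. Hence each `z` contributes `≫ Y^{3(r/2 - 1)}` points `u`, and
since `F` is positive definite these satisfy `|u| ≪ Y^{3/2}`. Taking `Y` of order `B^{2/3}` gives
`≫ B^{(2/3)(n - r - 1) + r - 2}` points of height at most `B`. If there is no such `z₀`, then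
`E(0, ·)` vanishes identically and every point with `y₁ = 0` is a zero of `C`.

Only one residue class of `N` being needed, the `u` can be counted without a singular series: for a
diagonal form, substituting `e_i + K t` turns the equation into `∑ (b_i t_i² + d_i t_i) = k` with
all `b_i` highly divisible and some `d_i = 1`. The circle method with Gaussian weights expresses its
number of solutions through theta series, and by Dirichlet's theorem the major arcs cover the
circle. The Gauss sums to all small moduli `q ≥ 2` vanish because of the linear term, and since
`r ≥ 5` the sum over `q` converges, so the other moduli cannot cancel the main term from `q = 1`.
-/

namespace CircleMethod

open Complex Filter Topology MeasureTheory
open scoped Real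

section GaussSum

variable {R : Type*} [CommRing R] [Fintype R]

/-- The quadratic Gauss sum with linear term, `∑ₛ ψ (u s² + v s)`; completing theta series modulo
`q` produces it for `R = ZMod q`. -/
noncomputable def quadGaussSum (ψ : AddChar R ℂ) (u v : R) : ℂ :=
  ∑ s, ψ (u * s ^ 2 + v * s)

/-- Translating the summation variable by `w` multiplies the sum by `ψ (v * w) ≠ 1`. -/
theorem quadGaussSum_eq_zero {ψ : AddChar R ℂ} {u v w : R} (hu : u * w = 0) (hv : ψ (v * w) ≠ 1) :
    quadGaussSum ψ u v = 0 := by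
  have hshift : quadGaussSum ψ u v = ψ (v * w) * quadGaussSum ψ u v := by
    rw [quadGaussSum, Finset.mul_sum, ← Equiv.sum_comp (Equiv.addRight w)]
    refine Finset.sum_congr rfl fun s _ => ?_
    rw [← AddChar.map_add_eq_mul, Equiv.coe_addRight]
    congr 1
    linear_combination (2 * s + w) * hu
  by_contra h
  exact hv (mul_right_cancel₀ h (by rw [one_mul, ← hshift]))

theorem normSq_quadGaussSum [DecidableEq R] {ψ : AddChar R ℂ} (hψ : ψ.IsPrimitive) (u v : R) :
    (‖quadGaussSum ψ u v‖ ^ 2 : ℂ) =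
      Fintype.card R * ∑ w with 2 * u * w = 0, ψ (u * w ^ 2 + v * w) := by
  calc (‖quadGaussSum ψ u v‖ ^ 2 : ℂ)
      = ∑ t, ∑ w, ψ (u * (w + t) ^ 2 + v * (w + t)) * ψ (-(u * t ^ 2 + v * t)) := by
        rw [← mul_conj', quadGaussSum, map_sum, Finset.mul_sum]
        refine Finset.sum_congr rfl fun t _ => ?_
        rw [Finset.sum_mul, ← Equiv.sum_comp (Equiv.addRight t)]
        simp only [Equiv.coe_addRight, AddChar.map_neg_eq_conj]
    _ = ∑ w, ψ (u * w ^ 2 + v * w) * ∑ t, ψ (t * (2 * u * w)) := by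
        rw [Finset.sum_comm]
        refine Finset.sum_congr rfl fun w _ => ?_
        rw [Finset.mul_sum]
        refine Finset.sum_congr rfl fun t _ => ?_
        rw [← AddChar.map_add_eq_mul, ← AddChar.map_add_eq_mul]
        congr 1
        ring
    _ = Fintype.card R * ∑ w with 2 * u * w = 0, ψ (u * w ^ 2 + v * w) := by
        simp only [AddChar.sum_mulShift _ hψ, Nat.cast_ite, Nat.cast_zero, mul_ite, mul_zero,
          Finset.sum_filter, Finset.mul_sum, mul_comm (ψ _)]
        simp only [ite_mul, zero_mul]

theorem norm_quadGaussSum_sq_le [DecidableEq R] {ψ : AddChar R ℂ} (hψ : ψ.IsPrimitive) (u v : R) :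
    ‖quadGaussSum ψ u v‖ ^ 2 ≤ Fintype.card R * (Finset.univ.filter (2 * u * · = 0)).card := by
  have hnorm := congrArg (‖·‖) (normSq_quadGaussSum hψ u v)
  simp only [norm_pow, norm_real, norm_norm, norm_mul, norm_natCast] at hnorm
  rw [hnorm]
  gcongr
  exact (norm_sum_le _ _).trans (by simp)

end GaussSum

section ZModGaussSum

variable {q : ℕ} [NeZero q]

theorem norm_quadGaussSum_sq_le_of_isUnit {u : ZMod q} (hu : IsUnit (2 * u)) (v : ZMod q) :
    ‖quadGaussSum ZMod.stdAddChar u v‖ ^ 2 ≤ q := by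
  simpa [hu.mul_right_eq_zero, Finset.filter_eq'] using
    norm_quadGaussSum_sq_le (ZMod.isPrimitive_stdAddChar q) u v

theorem norm_quadGaussSum_sq_le_of_isUnit_mul {a : ZMod q} (ha : IsUnit a) {b : ℕ} (hb : 0 < b)
    (v : ZMod q) : ‖quadGaussSum ZMod.stdAddChar (a * (b : ZMod q)) v‖ ^ 2 ≤ 2 * b * q := by
  have hcard : (Finset.univ.filter fun w : ZMod q => 2 * (a * b) * w = 0).card ≤ 2 * b := by
    refine le_of_eq_of_le (congrArg _ (Finset.filter_congr fun w _ => ?_))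
      (IsAddCyclic.card_nsmul_eq_zero_le (α := ZMod q) (n := 2 * b) (by positivity))
    rw [show 2 * (a * b) * w = a * ((2 * b : ℕ) • w) by simp; ring, ha.mul_right_eq_zero]
  refine (norm_quadGaussSum_sq_le (ZMod.isPrimitive_stdAddChar q) (a * b) v).trans ?_
  rw [ZMod.card, mul_comm]
  gcongr
  exact_mod_cast hcard

end ZModGaussSum

theorem ofReal_mul_cpow {x : ℝ} (hx : 0 < x) (z s : ℂ) :
    ((x : ℂ) * z) ^ s = (x : ℂ) ^ s * z ^ s := by
  have hx' : (x : ℂ) ≠ 0 := by exact_mod_cast hx.ne'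
  rcases eq_or_ne z 0 with rfl | hz
  · rcases eq_or_ne s 0 with rfl | hs
    · simp
    · simp [hs]
  rw [cpow_def_of_ne_zero (mul_ne_zero hx' hz), cpow_def_of_ne_zero hx', cpow_def_of_ne_zero hz,
    log_ofReal_mul hx hz, ofReal_log hx.le, add_mul, Complex.exp_add]

theorem ofReal_mul_cpow_one_half {x : ℝ} (hx : 0 < x) (z : ℂ) :
    ((x : ℂ) * z) ^ (1 / 2 : ℂ) = √x * z ^ (1 / 2 : ℂ) := by
  rw [ofReal_mul_cpow hx, Real.sqrt_eq_rpow, ofReal_cpow hx.le]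
  norm_num

section PoissonSummation

theorem summable_exp_quadratic {A : ℂ} (hA : 0 < A.re) (z : ℂ) :
    Summable fun n : ℤ => cexp (-π * A * n ^ 2 + 2 * π * z * n) := by
  refine (hasSum_jacobiTheta₂_term (-I * z) (τ := I * A) (by simpa using hA)).summable.congr
    fun n => ?_
  rw [jacobiTheta₂_term]
  congr 1
  linear_combination (-2 * π * n * z + π * n ^ 2 * A) * I_sq

theorem tsum_int_eq_sum_tsum_residue {f : ℤ → ℂ} (hf : Summable f) (q : ℕ) [NeZero q] :
    ∑' t, f t = ∑ s : ZMod q, ∑' m : ℤ, f (q * m + s.val) := by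
  let e : ZMod q × ℤ ≃ ℤ := ((ZMod.finEquiv q).symm.toEquiv.prodCongr (Equiv.refl ℤ)).trans
    ((Equiv.prodComm _ _).trans (Int.divModEquiv q).symm)
  have he : ∀ s m, e (s, m) = q * m + s.val := by
    obtain ⟨n, rfl⟩ := Nat.exists_eq_succ_of_ne_zero (NeZero.ne q)
    exact fun s m => congrArg (· + (s.val : ℤ)) (mul_comm _ _)
  have hfe : Summable fun p => f (e p) := e.summable_iff.mpr hf
  rw [← e.tsum_eq, hfe.tsum_prod, tsum_fintype]
  simp only [he]

variable {q : ℕ} [NeZero q] {A : ℂ}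

theorem tsum_exp_quadratic_residue (hA : 0 < A.re) (θ : ℂ) (s : ℕ) :
    ∑' m : ℤ, cexp (-π * A * (q * m + s) ^ 2 + 2 * π * I * θ * (q * m + s)) =
      1 / (q * A ^ (1 / 2 : ℂ)) *
        ∑' k : ℤ, cexp (2 * π * I * (k * s) / q) * cexp (-π / A * (k / q - θ) ^ 2) := by
  have hq : 0 < (q : ℝ) := Nat.cast_pos.mpr (NeZero.pos q)
  have hq0 : (q : ℂ) ≠ 0 := NeZero.ne _
  have hA0 : A ≠ 0 := fun h => by simp [h] at hA
  have hqA : (((q : ℝ) ^ 2 : ℝ) * A : ℂ) ^ (1 / 2 : ℂ) = q * A ^ (1 / 2 : ℂ) := by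
    rw [ofReal_mul_cpow_one_half (by positivity), Real.sqrt_sq hq.le, ofReal_natCast]
  have hre : 0 < (((q : ℝ) ^ 2 : ℝ) * A : ℂ).re := by
    rw [re_ofReal_mul]
    positivity
  calc ∑' m : ℤ, cexp (-π * A * (q * m + s) ^ 2 + 2 * π * I * θ * (q * m + s))
      = ∑' m : ℤ, cexp (-π * A * s ^ 2 + 2 * π * I * θ * s) *
          cexp (-π * (((q : ℝ) ^ 2 : ℝ) * A) * m ^ 2 + 2 * π * (-A * q * s + I * θ * q) * m) := by
        refine tsum_congr fun m => ?_
        rw [← Complex.exp_add, ofReal_pow, ofReal_natCast]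
        congr 1
        ring
    _ = _ := by
        rw [tsum_mul_left, Complex.tsum_exp_neg_quadratic hre, hqA, mul_left_comm, ← tsum_mul_left]
        congr 1
        refine tsum_congr fun k => ?_
        rw [← Complex.exp_add, ← Complex.exp_add, ofReal_pow, ofReal_natCast]
        congr 1
        field_simp
        ring_nf
        simp only [I_sq, I_pow_three, I_pow_four]
        ring

theorem summable_exp_mul_exp_quadratic (hA : 0 < A.re) (θ : ℂ) (s : ℕ) :
    Summable fun k : ℤ => cexp (2 * π * I * (k * s) / q) * cexp (-π / A * (k / q - θ) ^ 2) := by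
  have hq : 0 < (q : ℝ) := Nat.cast_pos.mpr (NeZero.pos q)
  have hq0 : (q : ℂ) ≠ 0 := NeZero.ne _
  have hA0 : A ≠ 0 := fun h => by simp [h] at hA
  have hre : 0 < ((((q : ℝ) ^ 2)⁻¹ : ℝ) * A⁻¹ : ℂ).re := by
    rw [re_ofReal_mul, inv_re]
    have := normSq_pos.mpr hA0
    positivity
  refine ((summable_exp_quadratic hre (θ / (q * A) + I * s / q)).mul_left
    (cexp (-π / A * θ ^ 2))).congr fun k => ?_
  rw [← Complex.exp_add, ← Complex.exp_add, ofReal_inv, ofReal_pow, ofReal_natCast]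
  congr 1
  field_simp
  ring

/-- Poisson summation for a Gaussian twisted by the `q`-periodic weight `φ`: sort the integers by
residue class modulo `q` and apply Poisson summation to each class. -/
theorem tsum_periodic_mul_exp_quadratic (hA : 0 < A.re) (θ : ℂ) {φ : ZMod q → ℂ}
    (hφ : Summable fun t : ℤ => φ t * cexp (-π * A * t ^ 2 + 2 * π * I * θ * t)) :
    ∑' t : ℤ, φ t * cexp (-π * A * t ^ 2 + 2 * π * I * θ * t) =
      1 / (q * A ^ (1 / 2 : ℂ)) * ∑' k : ℤ, (∑ s, φ s * ZMod.stdAddChar ((k : ZMod q) * s)) *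
        cexp (-π / A * (k / q - θ) ^ 2) := by
  have hchar : ∀ (k : ℤ) (s : ZMod q),
      ZMod.stdAddChar ((k : ZMod q) * s) = cexp (2 * π * I * (k * s.val) / q) := fun k s => by
    simpa using ZMod.stdAddChar_coe (N := q) (k * s.val)
  have hclass : ∀ s : ZMod q, ∑' m : ℤ, φ (q * m + s.val : ℤ) *
        cexp (-π * A * (q * m + s.val : ℤ) ^ 2 + 2 * π * I * θ * (q * m + s.val : ℤ)) =
      1 / (q * A ^ (1 / 2 : ℂ)) * ∑' k : ℤ, φ s * (ZMod.stdAddChar ((k : ZMod q) * s) *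
        cexp (-π / A * (k / q - θ) ^ 2)) := fun s => by
    have hφs : ∀ m : ℤ, φ (q * m + s.val : ℤ) = φ s := fun m => by simp
    simp only [hφs, tsum_mul_left, hchar, ← tsum_exp_quadratic_residue hA, mul_left_comm _ (φ s)]
    push_cast
    rfl
  have hsum : ∀ s : ZMod q, Summable fun k : ℤ => φ s * (ZMod.stdAddChar ((k : ZMod q) * s) *
      cexp (-π / A * (k / q - θ) ^ 2)) := fun s => by
    simpa only [hchar] using (summable_exp_mul_exp_quadratic hA θ s.val).mul_left (φ s)
  rw [tsum_int_eq_sum_tsum_residue hφ q, Finset.sum_congr rfl fun s _ => hclass s,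
    ← Finset.mul_sum, ← Summable.tsum_finsetSum fun s _ => hsum s]
  simp only [Finset.sum_mul, mul_assoc]

end PoissonSummation

theorem one_sub_two_I_mul_ne_zero (γ : ℝ) : (1 - 2 * I * γ : ℂ) ≠ 0 := fun h => by
  simpa using congrArg re h

theorem normSq_one_sub_two_I_mul (γ : ℝ) : normSq (1 - 2 * I * γ) = 1 + 4 * γ ^ 2 := by
  rw [normSq_apply]
  simp
  ring

theorem norm_one_sub_two_I_mul_cpow (γ s : ℝ) :
    ‖(1 - 2 * I * γ : ℂ) ^ (s : ℂ)‖ = (1 + 4 * γ ^ 2) ^ (s / 2) := by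
  rw [norm_cpow_real, norm_def, normSq_one_sub_two_I_mul, Real.sqrt_eq_rpow,
    ← Real.rpow_mul (by positivity), one_div_mul_eq_div]

section ThetaSeries

/-- The terms of the theta series attached to the polynomial `b t² + d t`: the phase
`e(α (b t² + d t))` weighted by a Gaussian of width `√(Y / b)`, which replaces the sharp cut-off
of the Weyl sum. -/
noncomputable def thetaTerm (b : ℕ) (d : ℤ) (Y α : ℝ) (t : ℤ) : ℂ :=
  cexp (-π * b / Y * t ^ 2 + 2 * π * I * (α * (b * t ^ 2 + d * t)))

/-- The Gaussian-weighted Weyl sum `∑ₜ exp (-π b t² / Y) e(α (b t² + d t))`. -/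
noncomputable def thetaSeries (b : ℕ) (d : ℤ) (Y α : ℝ) : ℂ :=
  ∑' t, thetaTerm b d Y α t

/-- The `k`-th dual Gaussian in the Poisson summation formula for `thetaSeries` at the point
`a / q + γ / Y`. -/
noncomputable def thetaDual (b : ℕ) (d : ℤ) (q : ℕ) (Y γ : ℝ) (k : ℤ) : ℂ :=
  cexp (-π / ((b / Y : ℝ) * (1 - 2 * I * γ)) * (k / q - γ / Y * d) ^ 2)

variable {b : ℕ} {d : ℤ} {q : ℕ} {Y γ : ℝ}

theorem re_mul_one_sub_two_I_mul (x γ : ℝ) : (x * (1 - 2 * I * γ) : ℂ).re = x := by simp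

theorem summable_thetaTerm (hb : 0 < b) (d : ℤ) (hY : 0 < Y) (α : ℝ) :
    Summable (thetaTerm b d Y α) := by
  have hre : 0 < ((b / Y : ℝ) * (1 - 2 * I * (α * Y : ℝ)) : ℂ).re := by
    rw [re_mul_one_sub_two_I_mul]
    positivity
  have hY0 : (Y : ℂ) ≠ 0 := by exact_mod_cast hY.ne'
  refine (summable_exp_quadratic hre (I * α * d)).congr fun t => ?_
  rw [thetaTerm]
  congr 1
  push_cast
  field_simp
  ring

theorem thetaSeries_eq_tsum_thetaDual [NeZero q] (hb : 0 < b) (d : ℤ) (hY : 0 < Y) (a : ℤ)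
    (γ : ℝ) :
    thetaSeries b d Y (a / q + γ / Y) = √Y / (√b * q * (1 - 2 * I * γ) ^ (1 / 2 : ℂ)) *
      ∑' k : ℤ, quadGaussSum ZMod.stdAddChar (a * b : ZMod q) (a * d + k) *
        thetaDual b d q Y γ k := by
  set A : ℂ := (b / Y : ℝ) * (1 - 2 * I * γ) with hA
  have hre : 0 < A.re := by
    rw [hA, re_mul_one_sub_two_I_mul]
    positivity
  have hq0 : (q : ℂ) ≠ 0 := NeZero.ne _
  have hY0 : (Y : ℂ) ≠ 0 := by exact_mod_cast hY.ne'
  have hterm : ∀ t : ℤ, thetaTerm b d Y (a / q + γ / Y) t =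
      ZMod.stdAddChar (a * (b * t ^ 2 + d * t) : ZMod q) *
        cexp (-π * A * t ^ 2 + 2 * π * I * (γ / Y * d) * t) := fun t => by
    have hchar := ZMod.stdAddChar_coe (N := q) (a * (b * t ^ 2 + d * t))
    push_cast at hchar
    rw [hchar, thetaTerm, ← Complex.exp_add, hA]
    congr 1
    push_cast
    field_simp
    ring
  have hsum := summable_thetaTerm hb d hY (a / q + γ / Y)
  rw [thetaSeries, tsum_congr hterm]
  rw [summable_congr hterm] at hsum
  rw [tsum_periodic_mul_exp_quadratic hre _
    (φ := fun t : ZMod q => ZMod.stdAddChar (a * (b * t ^ 2 + d * t) : ZMod q)) hsum]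
  congr 1
  · rw [hA, ofReal_mul_cpow_one_half (by positivity), Real.sqrt_div (by positivity)]
    push_cast
    field_simp
  · refine tsum_congr fun k => congrArg (· * _) (Finset.sum_congr rfl fun s _ => ?_)
    rw [← AddChar.map_add_eq_mul]
    congr 1
    ring

theorem norm_thetaDual (k : ℤ) :
    ‖thetaDual b d q Y γ k‖ =
      Real.exp (-(π * Y / (b * (1 + 4 * γ ^ 2))) * (k / q - γ / Y * d) ^ 2) := by
  have hfactor : (-π / ((b / Y : ℝ) * (1 - 2 * I * γ)) * (k / q - γ / Y * d) ^ 2 : ℂ) =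
      (-(π * Y / b) * (k / q - γ / Y * d) ^ 2 : ℝ) * (1 - 2 * I * γ : ℂ)⁻¹ := by
    push_cast
    rw [neg_div, div_mul_eq_div_div, div_div_eq_mul_div]
    ring
  rw [thetaDual, norm_exp, hfactor, re_ofReal_mul, inv_re, normSq_one_sub_two_I_mul]
  congr 1
  rw [show (1 - 2 * I * γ : ℂ).re = 1 by simp, ← div_div]
  ring

theorem summable_exp_neg_mul_sq_add {c : ℝ} (hc : 0 < c) (e : ℝ) :
    Summable fun k : ℤ => Real.exp (-c * k ^ 2 + e) := by
  have hre : 0 < ((c / π : ℝ) : ℂ).re := by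
    rw [ofReal_re]
    positivity
  refine ((summable_exp_quadratic hre 0).norm.mul_left (Real.exp e)).congr fun k => ?_
  rw [show (-π * (c / π : ℝ) * k ^ 2 + 2 * π * 0 * k : ℂ) = (-c * k ^ 2 : ℝ) by
    push_cast; field_simp; ring, norm_exp, ofReal_re, ← Real.exp_add, add_comm]

theorem norm_thetaDual_le (hb : 0 < b) (d : ℤ) (hq : 0 < q) (hY : 1 ≤ Y) (hqY : (q : ℝ) ^ 2 ≤ Y)
    (hγ : (q : ℝ) ^ 2 * γ ^ 2 ≤ Y) (k : ℤ) :
    ‖thetaDual b d q Y γ k‖ ≤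
      Real.exp (-(π / (10 * b)) * k ^ 2 + π / (5 * b) * d ^ 2) := by
  set η : ℝ := q * γ / Y * d with hη
  have : 0 < Y := by linarith
  have hηd : η ^ 2 ≤ (d : ℝ) ^ 2 := by
    have hle : (q * γ / Y) ^ 2 ≤ 1 := by
      rw [div_pow, div_le_one (by positivity), mul_pow]
      nlinarith
    calc η ^ 2 = (q * γ / Y) ^ 2 * (d : ℝ) ^ 2 := by rw [hη, mul_pow]
      _ ≤ 1 * (d : ℝ) ^ 2 := by gcongr
      _ = d ^ 2 := one_mul _
  have hshift : (k : ℝ) ^ 2 / 2 - d ^ 2 ≤ (k - η) ^ 2 := by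
    nlinarith [sq_nonneg ((k : ℝ) - 2 * η)]
  have hscale : 1 / 5 ≤ Y / ((1 + 4 * γ ^ 2) * q ^ 2) := by
    rw [div_le_div_iff₀ (by norm_num) (by positivity)]
    nlinarith
  rw [norm_thetaDual, Real.exp_le_exp]
  have hmain : 1 / 5 * ((k : ℝ) ^ 2 / 2 - d ^ 2) ≤ Y / ((1 + 4 * γ ^ 2) * q ^ 2) * (k - η) ^ 2 :=
    (mul_le_mul_of_nonneg_left hshift (by norm_num)).trans
      (mul_le_mul_of_nonneg_right hscale (sq_nonneg _))
  calc -(π * Y / (b * (1 + 4 * γ ^ 2))) * (k / q - γ / Y * d) ^ 2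
      = -(π / b * (Y / ((1 + 4 * γ ^ 2) * q ^ 2) * (k - η) ^ 2)) := by
        rw [hη]
        field_simp
    _ ≤ -(π / b * (1 / 5 * ((k : ℝ) ^ 2 / 2 - d ^ 2))) := by gcongr
    _ = -(π / (10 * b)) * k ^ 2 + π / (5 * b) * d ^ 2 := by
        field_simp
        ring

theorem isUnit_intCast_of_isCoprime {a : ℤ} (ha : IsCoprime a q) : IsUnit (a : ZMod q) := by
  have h := ha.map (Int.castRingHom (ZMod q))
  simpa [isCoprime_zero_right] using h

theorem norm_quadGaussSum_mul_thetaDual_le (hb : 0 < b) (d : ℤ) [NeZero q] (hY : 1 ≤ Y)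
    (hqY : (q : ℝ) ^ 2 ≤ Y) (hγ : (q : ℝ) ^ 2 * γ ^ 2 ≤ Y) {a : ℤ} (ha : IsCoprime a q) (k : ℤ) :
    ‖quadGaussSum ZMod.stdAddChar (a * b : ZMod q) (a * d + k) * thetaDual b d q Y γ k‖ ≤
      √(2 * b * q) * Real.exp (-(π / (10 * b)) * k ^ 2 + π / (5 * b) * d ^ 2) := by
  rw [norm_mul]
  gcongr
  · exact Real.le_sqrt_of_sq_le
      (norm_quadGaussSum_sq_le_of_isUnit_mul (isUnit_intCast_of_isCoprime ha) hb _)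
  · exact norm_thetaDual_le hb d (NeZero.pos q) hY hqY hγ k

theorem norm_thetaSeries_le (hb : 0 < b) (d : ℤ) :
    ∃ C > 0, ∀ (Y : ℝ) (q : ℕ) (a : ℤ) (γ : ℝ), 1 ≤ Y → 0 < q → (q : ℝ) ^ 2 ≤ Y →
      IsCoprime a (q : ℤ) → (q : ℝ) ^ 2 * γ ^ 2 ≤ Y →
      ‖thetaSeries b d Y (a / q + γ / Y)‖ ≤
        C * (√Y * ((q : ℝ) ^ (-(1 / 2) : ℝ) * (1 + 4 * γ ^ 2) ^ (-(1 / 4) : ℝ))) := by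
  set S := ∑' k : ℤ, Real.exp (-(π / (10 * b)) * k ^ 2 + π / (5 * b) * d ^ 2) with hS
  have hsum := summable_exp_neg_mul_sq_add (c := π / (10 * b)) (by positivity)
    (π / (5 * b) * d ^ 2)
  have hS0 : 0 < S := hsum.tsum_pos (fun k => (Real.exp_pos _).le) 0 (Real.exp_pos _)
  refine ⟨√2 * S, by positivity, fun Y q a γ hY hq hqY ha hγ => ?_⟩
  have : NeZero q := ⟨hq.ne'⟩
  have hdual : ‖∑' k : ℤ, quadGaussSum ZMod.stdAddChar (a * b : ZMod q) (a * d + k) *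
      thetaDual b d q Y γ k‖ ≤ √(2 * b * q) * S := by
    rw [hS, ← tsum_mul_left]
    exact tsum_of_norm_bounded (hsum.mul_left _).hasSum
      (norm_quadGaussSum_mul_thetaDual_le hb d hY hqY hγ ha)
  have hcpow : ‖(1 - 2 * I * γ : ℂ) ^ (1 / 2 : ℂ)‖ = (1 + 4 * γ ^ 2) ^ (1 / 4 : ℝ) := by
    have := norm_one_sub_two_I_mul_cpow γ (1 / 2)
    norm_num at this ⊢
    exact this
  rw [thetaSeries_eq_tsum_thetaDual hb d (by linarith), norm_mul, norm_div, norm_mul, norm_mul,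
    hcpow, norm_real, norm_real, norm_natCast, Real.norm_of_nonneg (Real.sqrt_nonneg _),
    Real.norm_of_nonneg (Real.sqrt_nonneg _)]
  calc _ ≤ √Y / (√b * q * (1 + 4 * γ ^ 2) ^ (1 / 4 : ℝ)) * (√(2 * b * q) * S) := by gcongr
    _ = _ := by
      rw [Real.rpow_neg (by positivity), Real.rpow_neg (by positivity), ← Real.sqrt_eq_rpow,
        Real.sqrt_mul (by positivity), Real.sqrt_mul (by positivity)]
      nth_rewrite 1 [← Real.sq_sqrt (Nat.cast_nonneg q)]
      field_simp

theorem tendsto_thetaDual (hb : 0 < b) (d : ℤ) (hq : 0 < q) (γ : ℝ) (k : ℤ) :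
    Tendsto (fun n : ℕ => thetaDual b d q n γ k) atTop (𝓝 (if k = 0 then 1 else 0)) := by
  split_ifs with hk
  · have hexp := (continuous_exp.tendsto _).comp
      ((tendsto_inv_atTop_nhds_zero_nat (𝕜 := ℂ)).const_mul
        (-π * (γ * d) ^ 2 / (b * (1 - 2 * I * γ))))
    rw [mul_zero, Complex.exp_zero] at hexp
    refine hexp.congr' ?_
    filter_upwards [eventually_ne_atTop 0] with n hn
    have := one_sub_two_I_mul_ne_zero γ
    simp only [Function.comp_apply, thetaDual, hk]
    congr 1
    push_cast
    field_simp
    ring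
  · rw [tendsto_zero_iff_norm_tendsto_zero]
    have hsq : Tendsto (fun n : ℕ => π / (b * (1 + 4 * γ ^ 2)) * ((k : ℝ) / q - γ / n * d) ^ 2)
        atTop (𝓝 (π / (b * (1 + 4 * γ ^ 2)) * ((k : ℝ) / q - 0 * d) ^ 2)) :=
      ((tendsto_const_nhds.sub
        ((tendsto_const_div_atTop_nhds_zero_nat γ).mul_const _)).pow 2).const_mul _
    have hpos : 0 < π / (b * (1 + 4 * γ ^ 2)) * ((k : ℝ) / q - 0 * d) ^ 2 := by
      rw [zero_mul, sub_zero]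
      positivity
    refine (Real.tendsto_exp_neg_atTop_nhds_zero.comp
      (hsq.pos_mul_atTop hpos tendsto_natCast_atTop_atTop)).congr fun n => ?_
    rw [norm_thetaDual, Function.comp_apply]
    ring_nf

theorem tendsto_thetaSeries_div_sqrt (hb : 0 < b) (d : ℤ) [NeZero q] {a : ℤ}
    (ha : IsCoprime a (q : ℤ)) (γ : ℝ) :
    Tendsto (fun n : ℕ => thetaSeries b d n (a / q + γ / n) / √n) atTop
      (𝓝 (quadGaussSum ZMod.stdAddChar (a * b : ZMod q) (a * d) /
        (√b * q * (1 - 2 * I * γ) ^ (1 / 2 : ℂ)))) := by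
  have hdual : Tendsto (fun n : ℕ => ∑' k : ℤ,
      quadGaussSum ZMod.stdAddChar (a * b : ZMod q) (a * d + k) * thetaDual b d q n γ k) atTop
      (𝓝 (∑' k : ℤ, if k = 0 then quadGaussSum ZMod.stdAddChar (a * b : ZMod q)
        (a * d) else 0)) := by
    refine tendsto_tsum_of_dominated_convergence
      ((summable_exp_neg_mul_sq_add (c := π / (10 * b)) (by positivity)
        (π / (5 * b) * d ^ 2)).mul_left √(2 * b * q)) (fun k => ?_) ?_
    · convert (tendsto_thetaDual hb d (NeZero.pos q) γ k).const_mul _ using 2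
      split_ifs with hk <;> simp [hk]
    · filter_upwards [tendsto_natCast_atTop_atTop.eventually_ge_atTop (1 : ℝ),
        tendsto_natCast_atTop_atTop.eventually_ge_atTop ((q : ℝ) ^ 2),
        tendsto_natCast_atTop_atTop.eventually_ge_atTop ((q : ℝ) ^ 2 * γ ^ 2)] with n hn hqn hγn k
      exact norm_quadGaussSum_mul_thetaDual_le hb d hn hqn hγn ha k
  rw [tsum_ite_eq] at hdual
  have hlim := hdual.const_mul (1 / (√b * q * (1 - 2 * I * γ) ^ (1 / 2 : ℂ)))
  rw [one_div_mul_eq_div] at hlim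
  refine hlim.congr' ?_
  filter_upwards [eventually_gt_atTop 0] with n hn
  have hn0 : ((√(n : ℝ) : ℝ) : ℂ) ≠ 0 := by
    exact_mod_cast (Real.sqrt_pos.mpr (Nat.cast_pos.mpr hn)).ne'
  rw [thetaSeries_eq_tsum_thetaDual hb d (Nat.cast_pos.mpr hn)]
  field_simp

end ThetaSeries

section SingularIntegral

theorem norm_cpow_mul_exp_neg_mul (a z : ℂ) {t : ℝ} (ht : 0 < t) :
    ‖(t : ℂ) ^ (a - 1) * cexp (-(z * t))‖ = t ^ (a.re - 1) * Real.exp (-z.re * t) := by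
  rw [norm_mul, norm_cpow_eq_rpow_re_of_pos ht, norm_exp]
  simp

theorem integrableOn_cpow_mul_exp_neg_mul_Ioi {a z : ℂ} (ha : 0 < a.re) (hz : 0 < z.re) :
    IntegrableOn (fun t : ℝ => (t : ℂ) ^ (a - 1) * cexp (-(z * t))) (Set.Ioi 0) := by
  have hreal := integrableOn_rpow_mul_exp_neg_mul_rpow (p := 1) (s := a.re - 1) (b := z.re)
    (by linarith) one_pos hz
  simp only [Real.rpow_one] at hreal
  refine hreal.mono' (by fun_prop) ?_
  filter_upwards [ae_restrict_mem measurableSet_Ioi] with t ht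
  exact (norm_cpow_mul_exp_neg_mul a z ht).le

theorem differentiableAt_integral_cpow_mul_exp_neg_mul_Ioi {a z : ℂ} (ha : 0 < a.re)
    (hz : 0 < z.re) :
    DifferentiableAt ℂ (fun z => ∫ t : ℝ in Set.Ioi 0, (t : ℂ) ^ (a - 1) * cexp (-(z * t))) z := by
  have ha' : 0 < (a + 1).re := by
    rw [add_re, one_re]
    linarith
  have hz' : 0 < ((z.re / 2 : ℝ) : ℂ).re := by
    rw [ofReal_re]
    linarith
  refine (hasDerivAt_integral_of_dominated_loc_of_deriv_le (s := {w | z.re / 2 < w.re})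
    (μ := volume.restrict (Set.Ioi 0))
    (F := fun w (t : ℝ) => (t : ℂ) ^ (a - 1) * cexp (-(w * t)))
    (F' := fun w t => -((t : ℂ) ^ (a + 1 - 1) * cexp (-(w * t))))
    ((isOpen_lt continuous_const continuous_re).mem_nhds (half_lt_self hz))
    (.of_forall fun w => by fun_prop) (integrableOn_cpow_mul_exp_neg_mul_Ioi ha hz)
    (by fun_prop) ?_ (integrableOn_cpow_mul_exp_neg_mul_Ioi ha' hz').norm
    ?_).2.differentiableAt
  · filter_upwards [ae_restrict_mem measurableSet_Ioi] with t (ht : 0 < t) w hw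
    rw [norm_neg, norm_cpow_mul_exp_neg_mul _ _ ht, norm_cpow_mul_exp_neg_mul _ _ ht, ofReal_re]
    have : z.re / 2 < w.re := hw
    gcongr
  · filter_upwards [ae_restrict_mem measurableSet_Ioi] with t (ht : 0 < t) w _
    have hderiv := (((hasDerivAt_id' w).mul_const (t : ℂ)).fun_neg.cexp).const_mul
      ((t : ℂ) ^ (a - 1))
    refine hderiv.congr_deriv ?_
    have ht0 : (t : ℂ) ≠ 0 := by exact_mod_cast ht.ne'
    rw [show a + 1 - 1 = a - 1 + 1 by ring, cpow_add _ _ ht0, cpow_one]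
    ring

theorem integral_cpow_mul_exp_neg_mul_Ioi_of_re_pos {a z : ℂ} (ha : 0 < a.re) (hz : 0 < z.re) :
    ∫ t : ℝ in Set.Ioi 0, (t : ℂ) ^ (a - 1) * cexp (-(z * t)) = z ^ (-a) * Gamma a := by
  have hopen : IsOpen {w : ℂ | 0 < w.re} := isOpen_lt continuous_const continuous_re
  have hint : AnalyticOnNhd ℂ
      (fun z => ∫ t : ℝ in Set.Ioi 0, (t : ℂ) ^ (a - 1) * cexp (-(z * t))) {w | 0 < w.re} :=
    DifferentiableOn.analyticOnNhd (fun w hw =>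
      (differentiableAt_integral_cpow_mul_exp_neg_mul_Ioi ha hw).differentiableWithinAt) hopen
  have hpow : AnalyticOnNhd ℂ (fun z => z ^ (-a) * Gamma a) {w | 0 < w.re} :=
    DifferentiableOn.analyticOnNhd (fun w hw => ((differentiableAt_id.cpow_const
      (Or.inl hw)).mul_const _).differentiableWithinAt) hopen
  refine hint.eqOn_of_preconnected_of_frequently_eq hpow
    (convex_halfSpace_re_gt 0).isPreconnected (z₀ := 1) (by simp) ?_ hz
  have hofReal : Tendsto ofReal (𝓝[≠] 1) (𝓝[≠] 1) :=
    (continuous_ofReal.tendsto' 1 1 rfl).inf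
      (tendsto_principal_principal.mpr fun x hx => by simpa using hx)
  have hpos : ∀ᶠ x : ℝ in 𝓝[≠] 1, 0 < x := nhdsWithin_le_nhds (lt_mem_nhds one_pos)
  refine hofReal.frequently (hpos.mono fun x hx => ?_).frequently
  rw [integral_cpow_mul_exp_neg_mul_Ioi ha hx, one_div, cpow_neg, inv_cpow]
  rw [arg_ofReal_of_nonneg hx.le]
  exact Real.pi_pos.ne

theorem integrable_one_add_four_mul_sq_rpow_neg {s : ℝ} (hs : 1 < s) :
    Integrable fun γ : ℝ => (1 + 4 * γ ^ 2) ^ (-s / 2) := by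
  have h := integrable_rpow_neg_one_add_norm_sq (E := ℝ) (μ := volume) (r := s) (by simpa using hs)
  refine (h.comp_mul_left' (R := 2) two_ne_zero).congr (.of_forall fun γ => ?_)
  simp only [Real.norm_eq_abs, sq_abs, mul_pow]
  norm_num

theorem integrable_one_sub_two_I_mul_cpow_neg {s : ℝ} (hs : 1 < s) :
    Integrable fun γ : ℝ => (1 - 2 * I * γ : ℂ) ^ (-s : ℂ) := by
  refine (integrable_one_add_four_mul_sq_rpow_neg hs).mono'
    (continuous_iff_continuousAt.mpr fun γ => ?_).aestronglyMeasurable (.of_forall fun γ => ?_)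
  · exact ContinuousAt.cpow (by fun_prop) continuousAt_const (Or.inl (by simp))
  · rw [← ofReal_neg, norm_one_sub_two_I_mul_cpow]

open FourierTransform in
theorem fourierInv_indicator_cpow_mul_exp {s : ℝ} (hs : 0 < s) (γ : ℝ) :
    𝓕⁻ ((Set.Ioi 0).indicator fun t : ℝ => (t : ℂ) ^ (s - 1 : ℂ) * cexp (-(π * t))) γ =
      (π * (1 - 2 * I * γ)) ^ (-s : ℂ) * Gamma s := by
  have hre : 0 < (π * (1 - 2 * I * γ) : ℂ).re := by
    rw [re_mul_one_sub_two_I_mul]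
    exact Real.pi_pos
  rw [← integral_cpow_mul_exp_neg_mul_Ioi_of_re_pos (by simpa using hs) hre,
    Real.fourierInv_eq', ← integral_indicator measurableSet_Ioi]
  refine integral_congr_ae (.of_forall fun t => ?_)
  by_cases ht : t ∈ Set.Ioi 0
  · simp only [Set.indicator_of_mem ht, smul_eq_mul]
    rw [mul_left_comm, ← Complex.exp_add]
    congr 2
    simp
    ring
  · simp only [Set.indicator_of_notMem ht, smul_zero]

open FourierTransform in
theorem integral_one_sub_two_I_mul_cpow_neg_mul_exp {s : ℝ} (hs : 1 < s) :
    ∫ γ : ℝ, (1 - 2 * I * γ : ℂ) ^ (-s : ℂ) * cexp (-(2 * π * I * γ)) =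
      (π ^ s * Real.exp (-π) / Real.Gamma s : ℝ) := by
  have hs0 : 0 < s := by linarith
  set f : ℝ → ℂ := (Set.Ioi 0).indicator fun t => (t : ℂ) ^ (s - 1 : ℂ) * cexp (-(π * t)) with hf
  have hf_int : Integrable f := (integrable_indicator_iff measurableSet_Ioi).mpr
    (integrableOn_cpow_mul_exp_neg_mul_Ioi (by simpa using hs0) (by simpa using Real.pi_pos))
  have hf_inv : 𝓕⁻ f = fun γ : ℝ =>
      (π : ℂ) ^ (-s : ℂ) * Gamma s * (1 - 2 * I * γ : ℂ) ^ (-s : ℂ) := funext fun γ => by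
    rw [hf, fourierInv_indicator_cpow_mul_exp hs0, ofReal_mul_cpow Real.pi_pos, mul_right_comm]
  have hf_cont : ContinuousAt f 1 := by
    refine ContinuousAt.congr (f := fun t : ℝ => (t : ℂ) ^ (s - 1 : ℂ) * cexp (-(π * t))) ?_ ?_
    · exact (continuous_ofReal.continuousAt.cpow continuousAt_const (by simp)).mul (by fun_prop)
    · filter_upwards [lt_mem_nhds (zero_lt_one' ℝ)] with t (ht : 0 < t)
      simp [hf, ht]
  have hf_fourier_int : Integrable (𝓕 f) := by
    have hf_inv_int : Integrable (𝓕⁻ f) := by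
      rw [hf_inv]
      exact (integrable_one_sub_two_I_mul_cpow_neg hs).const_mul _
    refine hf_inv_int.comp_neg.congr (.of_forall fun γ => ?_)
    simp only [Real.fourierInv_eq_fourier_neg, neg_neg]
  have hinv := hf_int.fourier_fourierInv_eq hf_fourier_int hf_cont
  have hf_one : f 1 = cexp (-π) := by simp [hf]
  have hGamma : Real.Gamma s ≠ 0 := (Real.Gamma_pos_of_pos hs0).ne'
  have hpi : (π : ℂ) ^ (s : ℂ) ≠ 0 := by simp [cpow_eq_zero_iff, Real.pi_ne_zero]
  rw [hf_inv, hf_one, Real.fourier_real_eq_integral_exp_smul] at hinv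
  have hGamma' : Gamma (s : ℂ) ≠ 0 := by rwa [Gamma_ofReal, ofReal_ne_zero]
  push_cast
  rw [ofReal_cpow Real.pi_pos.le, ← hinv, ← integral_const_mul, ← Gamma_ofReal, ← integral_div]
  refine integral_congr_ae (.of_forall fun γ => ?_)
  simp only [smul_eq_mul, cpow_neg]
  push_cast
  field_simp

end SingularIntegral

section Counting

theorem thetaTerm_eq_mul_exp (b : ℕ) (d : ℤ) (Y α : ℝ) (t : ℤ) :
    thetaTerm b d Y α t = (Real.exp (-(π * b / Y) * t ^ 2) : ℝ) *
      cexp (2 * π * I * (α * (b * t ^ 2 + d * t))) := by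
  rw [thetaTerm, Complex.exp_add]
  push_cast
  ring_nf

theorem norm_thetaTerm (b : ℕ) (d : ℤ) (Y α : ℝ) (t : ℤ) :
    ‖thetaTerm b d Y α t‖ = Real.exp (-(π * b / Y) * t ^ 2) := by
  have hphase : ‖cexp (2 * π * I * (α * (b * t ^ 2 + d * t)))‖ = 1 := by
    rw [show (2 * π * I * (α * (b * t ^ 2 + d * t)) : ℂ) =
      (2 * π * (α * (b * t ^ 2 + d * t)) : ℝ) * I by push_cast; ring, norm_exp_ofReal_mul_I]
  rw [thetaTerm_eq_mul_exp, norm_mul, hphase, mul_one, norm_real,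
    Real.norm_of_nonneg (by positivity)]

theorem continuous_thetaTerm (b : ℕ) (d : ℤ) (Y : ℝ) (t : ℤ) :
    Continuous fun α => thetaTerm b d Y α t := by
  unfold thetaTerm
  fun_prop

theorem summable_exp_neg_mul_sq {b : ℕ} (hb : 0 < b) {Y : ℝ} (hY : 0 < Y) :
    Summable fun t : ℤ => Real.exp (-(π * b / Y) * t ^ 2) := by
  simpa using summable_exp_neg_mul_sq_add (c := π * b / Y) (by positivity) 0

theorem continuous_thetaSeries {b : ℕ} (hb : 0 < b) (d : ℤ) {Y : ℝ} (hY : 0 < Y) :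
    Continuous (thetaSeries b d Y) :=
  continuous_tsum (continuous_thetaTerm b d Y) (summable_exp_neg_mul_sq hb hY)
    fun t α => (norm_thetaTerm b d Y α t).le

theorem integral_exp_two_pi_mul_I_mul_int (k : ℤ) :
    ∫ α in (-(1 / 2) : ℝ)..(1 / 2), cexp (2 * π * I * (α * k)) = if k = 0 then 1 else 0 := by
  split_ifs with hk
  · subst hk
    norm_num
  · have hk' : (2 * π * I * k : ℂ) ≠ 0 :=
      mul_ne_zero two_pi_I_ne_zero (Int.cast_ne_zero.mpr hk)
    have hcomm (α : ℝ) : cexp (2 * π * I * (α * k)) = cexp (2 * π * I * k * α) := by ring_nf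
    simp_rw [hcomm]
    rw [integral_exp_mul_complex hk', div_eq_zero_iff, sub_eq_zero]
    refine Or.inl (Complex.exp_eq_exp_iff_exists_int.mpr ⟨k, ?_⟩)
    push_cast
    ring

variable {ι : Type*} [Fintype ι]

/-- The integral points `t` on the quadric `∑ᵢ (bᵢ tᵢ² + dᵢ tᵢ) = n`. -/
def quadricPoints (b : ι → ℕ) (d : ι → ℤ) (n : ℤ) : Set (ι → ℤ) :=
  {t | ∑ i, (b i * t i ^ 2 + d i * t i) = n}

/-- The product of theta series which generates the numbers of points on the quadrics
`quadricPoints b d n`. -/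
noncomputable def thetaProd (b : ι → ℕ) (d : ι → ℤ) (Y α : ℝ) : ℂ :=
  ∏ i, thetaSeries (b i) (d i) Y α

variable {b : ι → ℕ} {Y : ℝ}

theorem continuous_thetaProd (hb : ∀ i, 0 < b i) (d : ι → ℤ) (hY : 0 < Y) :
    Continuous (thetaProd b d Y) :=
  continuous_finsetProd _ fun i _ => continuous_thetaSeries (hb i) (d i) hY

theorem finite_quadricPoints (hb : ∀ i, 0 < b i) (d : ι → ℤ) (n : ℤ) :
    (quadricPoints b d n).Finite := by
  classical
  set D := 2 * n + ∑ i, d i ^ 2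
  refine (Finset.finite_toSet (Fintype.piFinset fun _ : ι => Finset.Icc (-D) D)).subset
    fun t ht => ?_
  have hterm (i : ι) : t i ^ 2 - d i ^ 2 ≤ 2 * (b i * t i ^ 2 + d i * t i) := by
    have hbi : (1 : ℤ) ≤ b i := by exact_mod_cast hb i
    nlinarith [sq_nonneg (t i + d i), sq_nonneg (t i)]
  have hsum : ∑ i, t i ^ 2 ≤ D := by
    have h := Finset.sum_le_sum fun i (_ : i ∈ Finset.univ) => hterm i
    rw [← Finset.mul_sum, (show ∑ i, (b i * t i ^ 2 + d i * t i) = n from ht),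
      Finset.sum_sub_distrib] at h
    linarith
  rw [Finset.mem_coe, Fintype.mem_piFinset]
  intro i
  rw [Finset.mem_Icc, ← abs_le]
  calc |t i| ≤ t i ^ 2 := by simpa using Int.natAbs_le_self_sq (t i)
    _ ≤ ∑ i, t i ^ 2 := Finset.single_le_sum (fun i _ => sq_nonneg (t i)) (Finset.mem_univ i)
    _ ≤ D := hsum

theorem prod_thetaTerm_mul_exp (b : ι → ℕ) (d : ι → ℤ) (Y : ℝ) (n : ℤ) (t : ι → ℤ) (α : ℝ) :
    (∏ i, thetaTerm (b i) (d i) Y α (t i)) * cexp (-(2 * π * I * (α * n))) =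
      (∏ i, Real.exp (-(π * b i / Y) * t i ^ 2) : ℝ) *
        cexp (2 * π * I * (α * (∑ i, (b i * t i ^ 2 + d i * t i) - n : ℤ))) := by
  simp_rw [thetaTerm_eq_mul_exp]
  rw [Finset.prod_mul_distrib, ← Complex.exp_sum, mul_assoc, ← Complex.exp_add, ofReal_prod,
    ← Finset.mul_sum, ← Finset.mul_sum]
  congr 2
  push_cast
  ring

open Classical in
theorem norm_integral_prod_thetaTerm_le (b : ι → ℕ) (d : ι → ℤ) (hY : 0 < Y) (n : ℤ)
    (t : ι → ℤ) :
    ‖∫ α in (-(1 / 2) : ℝ)..(1 / 2),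
      (∏ i, thetaTerm (b i) (d i) Y α (t i)) * cexp (-(2 * π * I * (α * n)))‖ ≤
      if t ∈ quadricPoints b d n then 1 else 0 := by
  simp_rw [prod_thetaTerm_mul_exp]
  rw [intervalIntegral.integral_const_mul, integral_exp_two_pi_mul_I_mul_int]
  simp_rw [sub_eq_zero]
  by_cases ht : ∑ i, (b i * t i ^ 2 + d i * t i) = n
  · rw [if_pos ht, if_pos (show t ∈ quadricPoints b d n from ht), mul_one, norm_real,
      Real.norm_of_nonneg (by positivity)]
    refine Finset.prod_le_one (fun _ _ => by positivity) fun i _ => ?_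
    rw [Real.exp_le_one_iff, neg_mul, neg_nonpos]
    positivity
  · rw [if_neg ht, if_neg (show t ∉ quadricPoints b d n from ht), mul_zero, norm_zero]

theorem norm_integral_finset_prod_thetaTerm_le (hb : ∀ i, 0 < b i) (d : ι → ℤ) (hY : 0 < Y)
    (n : ℤ) (S : Finset ℤ) :
    ‖∫ α in (-(1 / 2) : ℝ)..(1 / 2),
      (∏ i, ∑ t ∈ S, thetaTerm (b i) (d i) Y α t) * cexp (-(2 * π * I * (α * n)))‖ ≤
      (quadricPoints b d n).ncard := by
  classical
  have hcont := fun i t => continuous_thetaTerm (b i) (d i) Y t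
  simp_rw [Finset.prod_univ_sum, Finset.sum_mul]
  rw [intervalIntegral.integral_finsetSum
    fun t _ => Continuous.intervalIntegrable (by fun_prop) _ _]
  refine (norm_sum_le _ _).trans ((Finset.sum_le_sum fun t _ =>
    norm_integral_prod_thetaTerm_le b d hY n t).trans ?_)
  rw [Finset.sum_boole, Nat.cast_le, ← Set.ncard_coe_finset]
  exact Set.ncard_le_ncard (fun t ht => (Finset.mem_filter.mp ht).2) (finite_quadricPoints hb d n)

theorem norm_integral_thetaProd_le_ncard (hb : ∀ i, 0 < b i) (d : ι → ℤ) (hY : 0 < Y) (n : ℤ) :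
    ‖∫ α in (-(1 / 2) : ℝ)..(1 / 2), thetaProd b d Y α * cexp (-(2 * π * I * (α * n)))‖ ≤
      (quadricPoints b d n).ncard := by
  have hcont := fun i t => continuous_thetaTerm (b i) (d i) Y t
  have hlim : Tendsto (fun S : Finset ℤ => ∫ α in (-(1 / 2) : ℝ)..(1 / 2),
      (∏ i, ∑ t ∈ S, thetaTerm (b i) (d i) Y α t) * cexp (-(2 * π * I * (α * n)))) atTop
      (𝓝 (∫ α in (-(1 / 2) : ℝ)..(1 / 2), thetaProd b d Y α * cexp (-(2 * π * I * (α * n))))) := by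
    refine intervalIntegral.tendsto_integral_filter_of_dominated_convergence
      (fun _ => ∏ i, ∑' t : ℤ, Real.exp (-(π * b i / Y) * t ^ 2))
      (.of_forall fun S => Continuous.aestronglyMeasurable (by fun_prop))
      (.of_forall fun S => .of_forall fun α _ => ?_) (by simp) (.of_forall fun α _ => ?_)
    · have hphase : ‖cexp (-(2 * π * I * (α * n)))‖ = 1 := by simp [norm_exp]
      rw [norm_mul, hphase, mul_one, norm_prod]
      refine Finset.prod_le_prod (fun _ _ => norm_nonneg _) fun i _ => (norm_sum_le _ _).trans ?_
      simp_rw [norm_thetaTerm]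
      exact (summable_exp_neg_mul_sq (hb i) hY).sum_le_tsum _ fun _ _ => by positivity
    · exact (tendsto_finsetProd _ fun i _ =>
        (summable_thetaTerm (hb i) (d i) hY α).hasSum).mul_const _
  exact le_of_tendsto hlim.norm
    (.of_forall (norm_integral_finset_prod_thetaTerm_le hb d hY n))

end Counting

section Arcs

/-- The major arc around `a / q`: the `α = a / q + γ / n` with `q² ≤ n` and `(q γ)² ≤ n`. -/
def majorArc (n q : ℕ) (a : ℤ) : Set ℝ :=
  {α | (q : ℝ) ^ 2 ≤ n ∧ (q : ℝ) ^ 2 * (n * (α - a / q)) ^ 2 ≤ n}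

theorem isClosed_majorArc (n q : ℕ) (a : ℤ) : IsClosed (majorArc n q a) := by
  refine IsClosed.and ?_ ?_ <;> exact isClosed_le (by fun_prop) (by fun_prop)

theorem mul_sub_sq_le_one_of_mem_majorArc {n q : ℕ} (hn : 0 < n) (hq : 0 < q) {a : ℤ} {α : ℝ}
    (hα : α ∈ majorArc n q a) : n * (α - a / q) ^ 2 ≤ 1 := by
  have hn' : (0 : ℝ) < n := by exact_mod_cast hn
  have hq' : (1 : ℝ) ≤ (q : ℝ) ^ 2 := one_le_pow₀ (by exact_mod_cast hq)
  refine le_of_mul_le_mul_left ?_ hn'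
  calc (n : ℝ) * (n * (α - a / q) ^ 2) = 1 * (n * (α - a / q)) ^ 2 := by ring
    _ ≤ (q : ℝ) ^ 2 * (n * (α - a / q)) ^ 2 := by gcongr
    _ ≤ n * 1 := by simpa using hα.2

theorem majorArc_subset_Icc {n q : ℕ} (hn : 0 < n) (hq : 0 < q) (a : ℤ) :
    majorArc n q a ⊆ Set.Icc (a / q - 1) (a / q + 1) := by
  intro α hα
  have hn' : (1 : ℝ) ≤ n := by exact_mod_cast hn
  have hsq := mul_sub_sq_le_one_of_mem_majorArc hn hq hα
  have habs := abs_le.mp ((sq_le_one_iff_abs_le_one (α - a / q)).mp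
    (by nlinarith [sq_nonneg (α - a / q)]))
  constructor <;> linarith [habs.1, habs.2]

theorem majorArc_one_zero_subset_Icc {n : ℕ} (hn : 4 ≤ n) :
    majorArc n 1 0 ⊆ Set.Icc (-(1 / 2)) (1 / 2) := by
  intro α hα
  have hn' : (4 : ℝ) ≤ n := by exact_mod_cast hn
  have hsq := mul_sub_sq_le_one_of_mem_majorArc (by omega) one_pos hα
  rw [Int.cast_zero, zero_div, sub_zero] at hsq
  exact abs_le_of_sq_le_sq' (by nlinarith [sq_nonneg α]) (by norm_num)

/-- The numerators `a` of the fractions `a / q` in lowest terms with `|a / q| ≤ 1`. -/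
noncomputable def arcNumerators (q : ℕ) : Finset ℤ :=
  {a ∈ Finset.Icc (-(q : ℤ)) q | Int.gcd a q = 1}

theorem mem_arcNumerators {q : ℕ} {a : ℤ} :
    a ∈ arcNumerators q ↔ |a| ≤ q ∧ IsCoprime a (q : ℤ) := by
  rw [arcNumerators, Finset.mem_filter, Finset.mem_Icc, Int.isCoprime_iff_gcd_eq_one, abs_le]

theorem card_arcNumerators_le (q : ℕ) : (arcNumerators q).card ≤ 2 * q + 1 := by
  refine (Finset.card_filter_le _ _).trans ?_
  rw [Int.card_Icc]
  omega

theorem exists_rat_mul_sq_le_one {n : ℕ} (hn : 0 < n) (α : ℝ) :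
    ∃ x : ℚ, x.den ≤ Nat.sqrt n ∧ n * (α * x.den - x.num) ^ 2 ≤ 1 := by
  set N := Nat.sqrt n
  obtain ⟨x, hx, hxden⟩ := Real.exists_rat_abs_sub_le_and_den_le α (n := N) (Nat.sqrt_pos.mpr hn)
  have hnN : (n : ℝ) ≤ (N + 1) ^ 2 := by exact_mod_cast (Nat.lt_succ_sqrt' n).le
  have hdist : |α * x.den - x.num| ≤ 1 / (N + 1) := by
    have hfactor : α * x.den - x.num = (α - x) * x.den := by
      rw [Rat.cast_def]
      field_simp
    rw [hfactor, abs_mul, Nat.abs_cast]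
    calc |α - x| * x.den ≤ 1 / ((N + 1) * (x.den : ℝ)) * x.den := by gcongr
      _ = 1 / (N + 1) := by field_simp
  refine ⟨x, hxden, ?_⟩
  calc (n : ℝ) * (α * x.den - x.num) ^ 2 ≤ (N + 1) ^ 2 * (1 / (N + 1)) ^ 2 := by
        rw [← sq_abs (α * x.den - x.num)]
        gcongr
    _ = 1 := by field_simp

theorem exists_mem_majorArc {n : ℕ} (hn : 4 < n) {α : ℝ} (hα : |α| ≤ 1 / 2) :
    ∃ q : ℕ, 0 < q ∧ q ≤ n ∧ ∃ a ∈ arcNumerators q, (q = 1 → a = 0) ∧ α ∈ majorArc n q a := by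
  obtain ⟨x, hxden, hdist⟩ := exists_rat_mul_sq_le_one (n := n) (by omega) α
  have hn' : (4 : ℝ) < n := by exact_mod_cast hn
  have hq : (1 : ℝ) ≤ x.den := by exact_mod_cast x.den_pos
  have hnum : |(x.num : ℝ)| < x.den / 2 + 1 / 2 := by
    have hlt : |α * x.den - x.num| < 1 / 2 :=
      abs_lt_of_sq_lt_sq (by nlinarith [sq_nonneg (α * x.den - x.num)]) (by norm_num)
    calc |(x.num : ℝ)| ≤ |α * x.den| + |α * x.den - x.num| := by
          simpa using abs_sub (α * x.den) (α * x.den - x.num)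
      _ < 1 / 2 * x.den + 1 / 2 := by
          rw [abs_mul, Nat.abs_cast]
          exact add_lt_add_of_le_of_lt (by gcongr) hlt
      _ = x.den / 2 + 1 / 2 := by ring
  refine ⟨x.den, x.den_pos, hxden.trans (Nat.sqrt_le_self n), x.num,
    mem_arcNumerators.mpr ⟨?_, Rat.isCoprime_num_den x⟩, fun h1 => ?_, ?_, ?_⟩
  · have : |(x.num : ℝ)| ≤ x.den := by linarith
    exact_mod_cast this
  · have : |(x.num : ℝ)| < 1 := by
      rw [h1] at hnum
      norm_num at hnum ⊢
      exact hnum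
    exact Int.abs_lt_one_iff.mp (by exact_mod_cast this)
  · exact_mod_cast Nat.le_sqrt'.mp hxden
  · calc (x.den : ℝ) ^ 2 * (n * (α - x.num / x.den)) ^ 2
        = n * ((n : ℝ) * (α * x.den - x.num) ^ 2) := by field_simp
      _ ≤ (n : ℝ) * 1 := by gcongr
      _ = n := mul_one _

/-- The bound for the rescaled theta series of one variable on the major arcs with denominator
`q`. -/
noncomputable def arcWeight (q : ℕ) (γ : ℝ) : ℝ :=
  (q : ℝ) ^ (-(1 / 2) : ℝ) * (1 + 4 * γ ^ 2) ^ (-(1 / 4) : ℝ)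

theorem arcWeight_nonneg (q : ℕ) (γ : ℝ) : 0 ≤ arcWeight q γ := by
  unfold arcWeight
  positivity

theorem arcWeight_le_one (q : ℕ) (γ : ℝ) : arcWeight q γ ≤ 1 := by
  refine mul_le_one₀ ?_ (by positivity) ?_
  · rcases q.eq_zero_or_pos with rfl | hq
    · norm_num
    · exact Real.rpow_le_one_of_one_le_of_nonpos (by exact_mod_cast hq) (by norm_num)
  · exact Real.rpow_le_one_of_one_le_of_nonpos (by nlinarith [sq_nonneg γ]) (by norm_num)

theorem arcWeight_pow_five (q : ℕ) (γ : ℝ) :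
    arcWeight q γ ^ 5 = (q : ℝ) ^ (-(5 / 2) : ℝ) * (1 + 4 * γ ^ 2) ^ (-(5 / 2) / 2 : ℝ) := by
  rw [arcWeight, mul_pow, ← Real.rpow_mul_natCast (by positivity),
    ← Real.rpow_mul_natCast (by positivity)]
  norm_num

theorem integrable_arcWeight_pow_five (q : ℕ) : Integrable fun γ => arcWeight q γ ^ 5 := by
  simp_rw [arcWeight_pow_five]
  exact (integrable_one_add_four_mul_sq_rpow_neg (by norm_num)).const_mul _

theorem integral_arcWeight_pow_five (q : ℕ) :
    ∫ γ, arcWeight q γ ^ 5 = (q : ℝ) ^ (-(5 / 2) : ℝ) * ∫ γ, arcWeight 1 γ ^ 5 := by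
  simp_rw [arcWeight_pow_five]
  rw [integral_const_mul, integral_const_mul]
  simp

variable {ι : Type*} [Fintype ι]

theorem norm_prod_le_prod_mul_pow {k : ℕ} (hk : k ≤ Fintype.card ι) {f : ι → ℂ} {C : ι → ℝ}
    {x : ℝ} (hC : ∀ i, 0 ≤ C i) (hx0 : 0 ≤ x) (hx1 : x ≤ 1) (hf : ∀ i, ‖f i‖ ≤ C i * x) :
    ‖∏ i, f i‖ ≤ (∏ i, C i) * x ^ k :=
  calc ‖∏ i, f i‖ ≤ ∏ i, C i * x := by
        rw [norm_prod]
        exact Finset.prod_le_prod (fun _ _ => norm_nonneg _) fun i _ => hf i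
    _ = (∏ i, C i) * x ^ Fintype.card ι := by
        rw [Finset.prod_mul_distrib, Finset.prod_const, Finset.card_univ]
    _ ≤ (∏ i, C i) * x ^ k :=
        mul_le_mul_of_nonneg_left (pow_le_pow_of_le_one hx0 hx1 hk)
          (Finset.prod_nonneg fun i _ => hC i)

/-- The generating function on the major arc around `a / q` in the variable
`γ = n (α - a / q)`, normalised to have a limit as `n → ∞`. -/
noncomputable def arcDensity (b : ι → ℕ) (d : ι → ℤ) (n q : ℕ) (a : ℤ) (γ : ℝ) : ℂ :=
  (majorArc n q a).indicator (thetaProd b d n) (a / q + γ / n) / (√n : ℝ) ^ Fintype.card ι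

/-- The limit of `arcDensity b d n q a` as `n → ∞`. -/
noncomputable def limitDensity (b : ι → ℕ) (d : ι → ℤ) (q : ℕ) [NeZero q] (a : ℤ) (γ : ℝ) : ℂ :=
  ∏ i, quadGaussSum ZMod.stdAddChar ((a * b i : ZMod q)) (a * d i) /
    (√(b i) * q * (1 - 2 * I * γ) ^ (1 / 2 : ℂ))

open Classical in
theorem arcDensity_eq_ite (b : ι → ℕ) (d : ι → ℤ) {n : ℕ} (hn : 0 < n) (q : ℕ) (a : ℤ) (γ : ℝ) :
    arcDensity b d n q a γ = if (q : ℝ) ^ 2 ≤ n ∧ (q : ℝ) ^ 2 * γ ^ 2 ≤ n then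
      ∏ i, thetaSeries (b i) (d i) n (a / q + γ / n) / (√n : ℝ) else 0 := by
  have hn' : (n : ℝ) ≠ 0 := by exact_mod_cast hn.ne'
  have hγ : (n : ℝ) * ((a / q + γ / n) - a / q) = γ := by
    field_simp
    ring
  have hmem : a / q + γ / n ∈ majorArc n q a ↔ (q : ℝ) ^ 2 ≤ n ∧ (q : ℝ) ^ 2 * γ ^ 2 ≤ n := by
    rw [majorArc, Set.mem_ofPred_eq, hγ]
  rw [arcDensity, Set.indicator_apply, hmem]
  split_ifs
  · rw [Finset.prod_div_distrib, Finset.prod_const, Finset.card_univ, thetaProd]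
  · simp

variable {b : ι → ℕ}

theorem norm_arcDensity_le (hι : 5 ≤ Fintype.card ι) (hb : ∀ i, 0 < b i) (d : ι → ℤ) :
    ∃ C > 0, ∀ (n q : ℕ) (a : ℤ) (γ : ℝ), 0 < n → 0 < q → IsCoprime a (q : ℤ) →
      ‖arcDensity b d n q a γ‖ ≤ C * arcWeight q γ ^ 5 := by
  choose C hC0 hC using fun i => norm_thetaSeries_le (hb i) (d i)
  refine ⟨∏ i, C i, Finset.prod_pos fun i _ => hC0 i, fun n q a γ hn hq ha => ?_⟩
  rw [arcDensity_eq_ite b d hn]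
  split_ifs with h
  · have hs : 0 < √(n : ℝ) := Real.sqrt_pos.mpr (by exact_mod_cast hn)
    refine norm_prod_le_prod_mul_pow hι (fun i => (hC0 i).le) (arcWeight_nonneg q γ)
      (arcWeight_le_one q γ) fun i => ?_
    rw [norm_div, norm_real, Real.norm_of_nonneg hs.le, div_le_iff₀ hs]
    refine (hC i n q a γ (by exact_mod_cast hn) hq h.1 ha h.2).trans_eq ?_
    rw [arcWeight]
    ring
  · rw [norm_zero]
    exact mul_nonneg (Finset.prod_nonneg fun i _ => (hC0 i).le)
      (pow_nonneg (arcWeight_nonneg q γ) 5)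

theorem tendsto_arcDensity (hb : ∀ i, 0 < b i) (d : ι → ℤ) {q : ℕ} [NeZero q] {a : ℤ}
    (ha : IsCoprime a (q : ℤ)) (γ : ℝ) :
    Tendsto (fun n => arcDensity b d n q a γ) atTop (𝓝 (limitDensity b d q a γ)) := by
  refine (tendsto_finsetProd Finset.univ fun i _ =>
    tendsto_thetaSeries_div_sqrt (hb i) (d i) ha γ).congr' ?_
  have hcast := tendsto_natCast_atTop_atTop (R := ℝ)
  filter_upwards [eventually_gt_atTop 0, hcast.eventually_ge_atTop ((q : ℝ) ^ 2),
    hcast.eventually_ge_atTop ((q : ℝ) ^ 2 * γ ^ 2)] with n hn hq hγ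
  rw [arcDensity_eq_ite b d hn, if_pos ⟨hq, hγ⟩]

theorem integrable_indicator_majorArc_thetaProd (hb : ∀ i, 0 < b i) (d : ι → ℤ) {n q : ℕ}
    (hn : 0 < n) (hq : 0 < q) (a : ℤ) :
    Integrable ((majorArc n q a).indicator (thetaProd b d n)) := by
  rw [integrable_indicator_iff (isClosed_majorArc n q a).measurableSet]
  exact ((continuous_thetaProd hb d (by exact_mod_cast hn)).continuousOn.integrableOn_compact
    isCompact_Icc).mono_set (majorArc_subset_Icc hn hq a)

theorem measurable_arcDensity (hb : ∀ i, 0 < b i) (d : ι → ℤ) {n : ℕ} (hn : 0 < n) (q : ℕ)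
    (a : ℤ) : Measurable (arcDensity b d n q a) := by
  have hcont := continuous_thetaProd hb d (Y := n) (by exact_mod_cast hn)
  exact ((hcont.measurable.indicator (isClosed_majorArc n q a).measurableSet).comp
    (by fun_prop)).div_const _

end Arcs

section MajorArcs

variable {ι : Type*} [Fintype ι] {b : ι → ℕ}

theorem integral_comp_add_div {E : Type*} [NormedAddCommGroup E] [NormedSpace ℝ E] (f : ℝ → E)
    (x : ℝ) (n : ℕ) : ∫ γ : ℝ, f (x + γ / n) = (n : ℝ) • ∫ α, f α := by
  rw [Measure.integral_comp_div (fun y => f (x + y)), integral_add_left_eq_self f x, Nat.abs_cast]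

theorem integral_arcDensity_mul (b : ι → ℕ) (d : ι → ℤ) (n q : ℕ) (a : ℤ) (g : ℝ → ℂ) :
    ∫ γ, arcDensity b d n q a γ * g (a / q + γ / n) =
      n / (√n : ℝ) ^ Fintype.card ι *
        ∫ α, (majorArc n q a).indicator (thetaProd b d n) α * g α := by
  have hsubst := integral_comp_add_div
    (fun α => (majorArc n q a).indicator (thetaProd b d n) α * g α) (a / q) n
  rw [real_smul, ofReal_natCast] at hsubst
  rw [div_mul_eq_mul_div, ← hsubst, ← integral_div]
  simp_rw [arcDensity, div_mul_eq_mul_div]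

theorem integral_norm_arcDensity (b : ι → ℕ) (d : ι → ℤ) (n q : ℕ) (a : ℤ) :
    ∫ γ, ‖arcDensity b d n q a γ‖ =
      n / √n ^ Fintype.card ι * ∫ α, ‖(majorArc n q a).indicator (thetaProd b d n) α‖ := by
  have hsubst := integral_comp_add_div
    (fun α => ‖(majorArc n q a).indicator (thetaProd b d n) α‖) (a / q) n
  rw [smul_eq_mul] at hsubst
  rw [div_mul_eq_mul_div, ← hsubst, ← integral_div]
  simp_rw [arcDensity, norm_div, norm_pow, norm_real, Real.norm_of_nonneg (Real.sqrt_nonneg _)]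

theorem norm_thetaProd_sub_indicator_le (b : ι → ℕ) (d : ι → ℤ) {n : ℕ} (hn : 4 < n) {α : ℝ}
    (hα : |α| ≤ 1 / 2) :
    ‖thetaProd b d n α - (majorArc n 1 0).indicator (thetaProd b d n) α‖ ≤
      ∑ k ∈ Finset.range n, ∑ a ∈ arcNumerators (k + 2),
        ‖(majorArc n (k + 2) a).indicator (thetaProd b d n) α‖ := by
  by_cases hmem : α ∈ majorArc n 1 0
  · rw [Set.indicator_of_mem hmem, sub_self, norm_zero]
    positivity
  obtain ⟨q, hq0, hqn, a, ha, ha1, hqa⟩ := exists_mem_majorArc hn hα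
  obtain ⟨k, rfl⟩ : ∃ k, q = k + 2 := by
    refine Nat.exists_eq_add_of_le' (Nat.two_le_iff q |>.mpr ⟨hq0.ne', fun h1 => hmem ?_⟩)
    rwa [h1, ha1 h1] at hqa
  calc ‖thetaProd b d n α - (majorArc n 1 0).indicator (thetaProd b d n) α‖
      = ‖(majorArc n (k + 2) a).indicator (thetaProd b d n) α‖ := by
        rw [Set.indicator_of_notMem hmem, sub_zero, Set.indicator_of_mem hqa]
    _ ≤ ∑ a ∈ arcNumerators (k + 2), ‖(majorArc n (k + 2) a).indicator (thetaProd b d n) α‖ :=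
        Finset.single_le_sum
          (f := fun a => ‖(majorArc n (k + 2) a).indicator (thetaProd b d n) α‖)
          (fun _ _ => norm_nonneg _) ha
    _ ≤ _ := Finset.single_le_sum (f := fun k => ∑ a ∈ arcNumerators (k + 2),
          ‖(majorArc n (k + 2) a).indicator (thetaProd b d n) α‖)
        (fun _ _ => by positivity) (Finset.mem_range.mpr (by omega))

theorem norm_integral_thetaProd_sub_le (hb : ∀ i, 0 < b i) (d : ι → ℤ) {n : ℕ} (hn : 4 < n)
    {e : ℝ → ℂ} (he : Continuous e) (he1 : ∀ α, ‖e α‖ = 1) :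
    ‖(∫ α in (-(1 / 2) : ℝ)..(1 / 2), thetaProd b d n α * e α) -
        ∫ α, (majorArc n 1 0).indicator (thetaProd b d n) α * e α‖ ≤
      ∑ k ∈ Finset.range n, ∑ a ∈ arcNumerators (k + 2),
        ∫ α, ‖(majorArc n (k + 2) a).indicator (thetaProd b d n) α‖ := by
  have hle : (-(1 / 2) : ℝ) ≤ 1 / 2 := by norm_num
  have hn0 : 0 < n := by omega
  have hint (q : ℕ) (hq : 0 < q) (a : ℤ) :=
    integrable_indicator_majorArc_thetaProd hb d hn0 hq a
  have hcentral : ∫ α, (majorArc n 1 0).indicator (thetaProd b d n) α * e α =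
      ∫ α in (-(1 / 2) : ℝ)..(1 / 2), (majorArc n 1 0).indicator (thetaProd b d n) α * e α := by
    rw [intervalIntegral.integral_of_le hle, ← integral_Icc_eq_integral_Ioc]
    refine (setIntegral_eq_integral_of_forall_compl_eq_zero fun α hα => ?_).symm
    rw [Set.indicator_of_notMem (fun h => hα (majorArc_one_zero_subset_Icc hn.le h)), zero_mul]
  have hsum : Integrable fun α => ∑ k ∈ Finset.range n, ∑ a ∈ arcNumerators (k + 2),
      ‖(majorArc n (k + 2) a).indicator (thetaProd b d n) α‖ :=
    integrable_finsetSum _ fun k _ => integrable_finsetSum _ fun a _ =>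
      (hint (k + 2) (by omega) a).norm
  have hcont : Continuous fun α => thetaProd b d n α * e α :=
    (continuous_thetaProd hb d (by exact_mod_cast hn0)).mul he
  have hint1 := (hint 1 one_pos 0).mul_bdd he.aestronglyMeasurable
    (.of_forall fun α => (he1 α).le)
  rw [hcentral]
  calc ‖(∫ α in (-(1 / 2) : ℝ)..(1 / 2), thetaProd b d n α * e α) -
          ∫ α in (-(1 / 2) : ℝ)..(1 / 2), (majorArc n 1 0).indicator (thetaProd b d n) α * e α‖
      ≤ ∫ α in (-(1 / 2) : ℝ)..(1 / 2), ∑ k ∈ Finset.range n, ∑ a ∈ arcNumerators (k + 2),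
          ‖(majorArc n (k + 2) a).indicator (thetaProd b d n) α‖ := by
        rw [← intervalIntegral.integral_sub (hcont.intervalIntegrable _ _) hint1.intervalIntegrable]
        refine intervalIntegral.norm_integral_le_of_norm_le hle (.of_forall fun α hα => ?_)
          hsum.intervalIntegrable
        rw [← sub_mul, norm_mul, he1, mul_one]
        exact norm_thetaProd_sub_indicator_le b d hn (abs_le.mpr ⟨hα.1.le, hα.2⟩)
    _ ≤ ∫ α, ∑ k ∈ Finset.range n, ∑ a ∈ arcNumerators (k + 2),
          ‖(majorArc n (k + 2) a).indicator (thetaProd b d n) α‖ := by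
        rw [intervalIntegral.integral_of_le hle]
        exact setIntegral_le_integral hsum (.of_forall fun α => by positivity)
    _ = _ := by
        rw [integral_finsetSum _ fun k _ => integrable_finsetSum _ fun a _ =>
          (hint (k + 2) (by omega) a).norm]
        exact Finset.sum_congr rfl fun k _ =>
          integral_finsetSum _ fun a _ => (hint (k + 2) (by omega) a).norm

theorem norm_integral_thetaProd_sub_integral_arcDensity_le (hb : ∀ i, 0 < b i) (d : ι → ℤ)
    {n : ℕ} (hn : 4 < n) :
    ‖n / (√n : ℝ) ^ Fintype.card ι *
        (∫ α in (-(1 / 2) : ℝ)..(1 / 2), thetaProd b d n α * cexp (-(2 * π * I * (α * n)))) -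
        ∫ γ, arcDensity b d n 1 0 γ * cexp (-(2 * π * I * γ))‖ ≤
      ∑ k ∈ Finset.range n, ∑ a ∈ arcNumerators (k + 2), ∫ γ, ‖arcDensity b d n (k + 2) a γ‖ := by
  have hn0 : (n : ℂ) ≠ 0 := by
    exact_mod_cast (by omega : n ≠ 0)
  set e : ℝ → ℂ := fun α => cexp (-(2 * π * I * (α * n))) with he
  have he1 (α : ℝ) : ‖e α‖ = 1 := by simp [he, norm_exp]
  have hmain : ∫ γ, arcDensity b d n 1 0 γ * cexp (-(2 * π * I * γ)) =
      n / (√n : ℝ) ^ Fintype.card ι *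
        ∫ α, (majorArc n 1 0).indicator (thetaProd b d n) α * e α := by
    rw [← integral_arcDensity_mul]
    congr 1 with γ
    simp only [he]
    push_cast
    congr 5
    field_simp
    ring
  have hnorm : ‖(n / (√n : ℝ) ^ Fintype.card ι : ℂ)‖ = n / √n ^ Fintype.card ι := by
    rw [norm_div, norm_pow, Complex.norm_natCast, norm_real,
      Real.norm_of_nonneg (Real.sqrt_nonneg _)]
  simp_rw [integral_norm_arcDensity, ← Finset.mul_sum]
  rw [hmain, ← mul_sub, norm_mul, hnorm]
  gcongr
  exact norm_integral_thetaProd_sub_le hb d hn (by fun_prop) he1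

theorem integral_norm_le_of_le_arcWeight {f : ℝ → ℂ} {C : ℝ} {q : ℕ}
    (hf : ∀ γ, ‖f γ‖ ≤ C * arcWeight q γ ^ 5) :
    ∫ γ, ‖f γ‖ ≤ C * ((q : ℝ) ^ (-(5 / 2) : ℝ) * ∫ γ, arcWeight 1 γ ^ 5) := by
  rw [← integral_arcWeight_pow_five, ← integral_const_mul]
  exact integral_mono_of_nonneg (.of_forall fun γ => norm_nonneg _)
    ((integrable_arcWeight_pow_five q).const_mul _) (.of_forall hf)

/-- The constant in the bound for the contribution of the arcs with a given denominator. -/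
noncomputable def arcConstant : ℝ :=
  3 * ∫ γ, arcWeight 1 γ ^ 5

theorem arcConstant_nonneg : 0 ≤ arcConstant :=
  mul_nonneg (by norm_num) (integral_nonneg fun γ => pow_nonneg (arcWeight_nonneg 1 γ) 5)

theorem sum_integral_norm_le_of_le_arcWeight {f : ℤ → ℝ → ℂ} {C : ℝ} (hC : 0 ≤ C) {q : ℕ}
    (hq : 0 < q) (hf : ∀ a ∈ arcNumerators q, ∀ γ, ‖f a γ‖ ≤ C * arcWeight q γ ^ 5) :
    ∑ a ∈ arcNumerators q, ∫ γ, ‖f a γ‖ ≤ C * (arcConstant * (q : ℝ) ^ (-(3 / 2) : ℝ)) := by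
  have hW : 0 ≤ ∫ γ, arcWeight 1 γ ^ 5 :=
    integral_nonneg fun γ => pow_nonneg (arcWeight_nonneg 1 γ) 5
  have hcard : ((arcNumerators q).card : ℝ) ≤ 3 * q := by
    exact_mod_cast (card_arcNumerators_le q).trans (by omega)
  have hpow : (q : ℝ) ^ (-(3 / 2) : ℝ) = (q : ℝ) ^ (-(5 / 2) : ℝ) * q := by
    rw [← Real.rpow_add_one (by positivity)]
    norm_num
  calc ∑ a ∈ arcNumerators q, ∫ γ, ‖f a γ‖
      ≤ (arcNumerators q).card • (C * ((q : ℝ) ^ (-(5 / 2) : ℝ) * ∫ γ, arcWeight 1 γ ^ 5)) :=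
        Finset.sum_le_card_nsmul _ _ _ fun a ha => integral_norm_le_of_le_arcWeight (hf a ha)
    _ ≤ 3 * q * (C * ((q : ℝ) ^ (-(5 / 2) : ℝ) * ∫ γ, arcWeight 1 γ ^ 5)) := by
        rw [nsmul_eq_mul]
        gcongr
    _ = C * (arcConstant * (q : ℝ) ^ (-(3 / 2) : ℝ)) := by
        rw [hpow, arcConstant]
        ring

theorem summable_nat_add_two_rpow :
    Summable fun k : ℕ => ((k + 2 : ℕ) : ℝ) ^ (-(3 / 2) : ℝ) :=
  (summable_nat_add_iff 2).mpr (Real.summable_nat_rpow.mpr (by norm_num))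

theorem tendsto_integral_arcDensity_mul_exp (hι : 5 ≤ Fintype.card ι) (hb : ∀ i, 0 < b i)
    (d : ι → ℤ) :
    Tendsto (fun n : ℕ => ∫ γ, arcDensity b d n 1 0 γ * cexp (-(2 * π * I * γ))) atTop
      (𝓝 (∫ γ, limitDensity b d 1 0 γ * cexp (-(2 * π * I * γ)))) := by
  obtain ⟨C, -, hC⟩ := norm_arcDensity_le hι hb d
  refine tendsto_integral_filter_of_dominated_convergence (fun γ => C * arcWeight 1 γ ^ 5) ?_ ?_
    ((integrable_arcWeight_pow_five 1).const_mul _)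
    (.of_forall fun γ => (tendsto_arcDensity hb d isCoprime_one_right γ).mul_const _)
  · filter_upwards [eventually_gt_atTop 0] with n hn
    exact ((measurable_arcDensity hb d hn 1 0).mul (by fun_prop)).aestronglyMeasurable
  · filter_upwards [eventually_gt_atTop 0] with n hn
    refine .of_forall fun γ => ?_
    have hphase : ‖cexp (-(2 * π * I * γ))‖ = 1 := by simp [norm_exp]
    rw [norm_mul, hphase, mul_one]
    exact hC n 1 0 γ hn one_pos isCoprime_one_right

theorem tendsto_integral_norm_arcDensity (hι : 5 ≤ Fintype.card ι) (hb : ∀ i, 0 < b i)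
    (d : ι → ℤ) {q : ℕ} [NeZero q] {a : ℤ} (ha : IsCoprime a (q : ℤ)) :
    Tendsto (fun n : ℕ => ∫ γ, ‖arcDensity b d n q a γ‖) atTop
      (𝓝 (∫ γ, ‖limitDensity b d q a γ‖)) := by
  obtain ⟨C, -, hC⟩ := norm_arcDensity_le hι hb d
  refine tendsto_integral_filter_of_dominated_convergence (fun γ => C * arcWeight q γ ^ 5) ?_ ?_
    ((integrable_arcWeight_pow_five q).const_mul _)
    (.of_forall fun γ => (tendsto_arcDensity hb d ha γ).norm)
  · filter_upwards [eventually_gt_atTop 0] with n hn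
    exact (measurable_arcDensity hb d hn q a).norm.aestronglyMeasurable
  · filter_upwards [eventually_gt_atTop 0] with n hn
    refine .of_forall fun γ => ?_
    rw [norm_norm]
    exact hC n q a γ hn (NeZero.pos q) ha

theorem sum_integral_norm_arcDensity_le (hι : 5 ≤ Fintype.card ι) (hb : ∀ i, 0 < b i)
    (d : ι → ℤ) : ∃ C : ℝ, ∀ n : ℕ, 0 < n → ∀ k : ℕ,
      ∑ a ∈ arcNumerators (k + 2), ∫ γ, ‖arcDensity b d n (k + 2) a γ‖ ≤
        C * ((k + 2 : ℕ) : ℝ) ^ (-(3 / 2) : ℝ) := by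
  obtain ⟨C, hC0, hC⟩ := norm_arcDensity_le hι hb d
  refine ⟨C * arcConstant, fun n hn k => ?_⟩
  rw [mul_assoc]
  exact sum_integral_norm_le_of_le_arcWeight hC0.le (by omega) fun a ha γ =>
    hC n (k + 2) a γ hn (by omega) (mem_arcNumerators.mp ha).2

theorem tendsto_tsum_integral_norm_arcDensity (hι : 5 ≤ Fintype.card ι) (hb : ∀ i, 0 < b i)
    (d : ι → ℤ) :
    Tendsto (fun n : ℕ => ∑' k : ℕ, ∑ a ∈ arcNumerators (k + 2),
        ∫ γ, ‖arcDensity b d n (k + 2) a γ‖) atTop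
      (𝓝 (∑' k : ℕ, ∑ a ∈ arcNumerators (k + 2), ∫ γ, ‖limitDensity b d (k + 2) a γ‖)) := by
  obtain ⟨C, hC⟩ := sum_integral_norm_arcDensity_le hι hb d
  refine tendsto_tsum_of_dominated_convergence (summable_nat_add_two_rpow.mul_left C)
    (fun k => tendsto_finsetSum _ fun a ha =>
      tendsto_integral_norm_arcDensity hι hb d (mem_arcNumerators.mp ha).2) ?_
  filter_upwards [eventually_gt_atTop 0] with n hn k
  rw [Real.norm_of_nonneg (by positivity)]
  exact hC n hn k

theorem norm_integral_arcDensity_le (hι : 5 ≤ Fintype.card ι) (hb : ∀ i, 0 < b i) (d : ι → ℤ)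
    {n : ℕ} (hn : 4 < n) :
    ‖∫ γ, arcDensity b d n 1 0 γ * cexp (-(2 * π * I * γ))‖ ≤
      n / √n ^ Fintype.card ι * (quadricPoints b d n).ncard +
        ∑' k : ℕ, ∑ a ∈ arcNumerators (k + 2), ∫ γ, ‖arcDensity b d n (k + 2) a γ‖ := by
  have hn0 : 0 < n := by omega
  obtain ⟨C, hC⟩ := sum_integral_norm_arcDensity_le hι hb d
  have hsum : Summable fun k : ℕ => ∑ a ∈ arcNumerators (k + 2),
      ∫ γ, ‖arcDensity b d n (k + 2) a γ‖ :=
    (summable_nat_add_two_rpow.mul_left C).of_nonneg_of_le (fun k => by positivity) (hC n hn0)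
  have harcs := (norm_sub_rev _ _).trans_le
    (norm_integral_thetaProd_sub_integral_arcDensity_le hb d hn)
  have hcount : ‖n / (√n : ℝ) ^ Fintype.card ι * ∫ α in (-(1 / 2) : ℝ)..(1 / 2),
      thetaProd b d n α * cexp (-(2 * π * I * (α * n)))‖ ≤
      n / √n ^ Fintype.card ι * (quadricPoints b d n).ncard := by
    rw [norm_mul, norm_div, norm_pow, Complex.norm_natCast, norm_real,
      Real.norm_of_nonneg (Real.sqrt_nonneg _)]
    gcongr
    exact_mod_cast norm_integral_thetaProd_le_ncard hb d (by exact_mod_cast hn0) n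
  have hfinite := hsum.sum_le_tsum (Finset.range n) fun k _ => by positivity
  linarith [norm_le_norm_add_norm_sub' (∫ γ, arcDensity b d n 1 0 γ * cexp (-(2 * π * I * γ)))
    (n / (√n : ℝ) ^ Fintype.card ι * ∫ α in (-(1 / 2) : ℝ)..(1 / 2),
      thetaProd b d n α * cexp (-(2 * π * I * (α * n))))]

theorem exists_mul_rpow_le_ncard_of_tsum_lt (hι : 5 ≤ Fintype.card ι) (hb : ∀ i, 0 < b i)
    (d : ι → ℤ)
    (hlt : ∑' k : ℕ, ∑ a ∈ arcNumerators (k + 2), ∫ γ, ‖limitDensity b d (k + 2) a γ‖ <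
      ‖∫ γ, limitDensity b d 1 0 γ * cexp (-(2 * π * I * γ))‖) :
    ∃ c > 0, ∀ᶠ n : ℕ in atTop,
      c * (n : ℝ) ^ ((Fintype.card ι : ℝ) / 2 - 1) ≤ (quadricPoints b d n).ncard := by
  obtain ⟨c, hc0, hc⟩ := exists_between (sub_pos.mpr hlt)
  have hlim := (tendsto_integral_arcDensity_mul_exp hι hb d).norm.sub
    (tendsto_tsum_integral_norm_arcDensity hι hb d)
  refine ⟨c, hc0, ?_⟩
  filter_upwards [hlim.eventually_const_lt hc, eventually_gt_atTop 4] with n hcn hn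
  have hn0 : (0 : ℝ) < n := by exact_mod_cast (by omega : 0 < n)
  have hle : c ≤ n / √n ^ Fintype.card ι * (quadricPoints b d n).ncard := by
    linarith [norm_integral_arcDensity_le hι hb d hn]
  have hpow : (n : ℝ) ^ ((Fintype.card ι : ℝ) / 2 - 1) = √n ^ Fintype.card ι / n := by
    rw [Real.rpow_sub hn0, Real.rpow_one, Real.sqrt_eq_rpow, ← Real.rpow_mul_natCast hn0.le]
    congr 2
    ring
  calc c * (n : ℝ) ^ ((Fintype.card ι : ℝ) / 2 - 1)
      ≤ n / √n ^ Fintype.card ι * (quadricPoints b d n).ncard * (√n ^ Fintype.card ι / n) := by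
        rw [hpow]
        gcongr
    _ = (quadricPoints b d n).ncard := by field_simp

end MajorArcs

section SingularSeries

variable {ι : Type*} [Fintype ι] {b : ι → ℕ}

theorem limitDensity_one_zero (b : ι → ℕ) (d : ι → ℤ) (γ : ℝ) :
    limitDensity b d 1 0 γ =
      ((∏ i, (√(b i))⁻¹ : ℝ) : ℂ) *
        (1 - 2 * I * γ : ℂ) ^ (-((Fintype.card ι / 2 : ℝ) : ℂ)) := by
  have hpow : (1 - 2 * I * γ : ℂ) ^ (-((Fintype.card ι / 2 : ℝ) : ℂ)) =
      ∏ _i : ι, ((1 - 2 * I * γ : ℂ) ^ (1 / 2 : ℂ))⁻¹ := by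
    rw [Finset.prod_const, Finset.card_univ, cpow_neg, inv_pow, ← cpow_nat_mul]
    push_cast
    congr 2
    ring
  rw [hpow, limitDensity, ofReal_prod, ← Finset.prod_mul_distrib]
  refine Finset.prod_congr rfl fun i _ => ?_
  have hgauss : quadGaussSum (ZMod.stdAddChar (N := 1)) (((0 : ℤ) : ZMod 1) * b i)
      (((0 : ℤ) : ZMod 1) * d i) = 1 := by
    simp [quadGaussSum]
  rw [hgauss, Nat.cast_one, mul_one, one_div, mul_inv, ofReal_inv]

theorem exists_integral_limitDensity_one_zero_mul_exp_eq (hι : 2 < Fintype.card ι) :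
    ∃ J : ℝ, 0 < J ∧ ∀ (b : ι → ℕ) (d : ι → ℤ),
      ∫ γ, limitDensity b d 1 0 γ * cexp (-(2 * π * I * γ)) = ((∏ i, (√(b i))⁻¹) * J : ℝ) := by
  have hs : (1 : ℝ) < Fintype.card ι / 2 := by
    rw [lt_div_iff₀ two_pos, one_mul]
    exact_mod_cast hι
  have := Real.Gamma_pos_of_pos (zero_lt_one.trans hs)
  refine ⟨π ^ (Fintype.card ι / 2 : ℝ) * Real.exp (-π) / Real.Gamma (Fintype.card ι / 2),
    by positivity, fun b d => ?_⟩
  simp_rw [limitDensity_one_zero, mul_assoc (((∏ i, (√(b i))⁻¹ : ℝ)) : ℂ)]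
  rw [integral_const_mul, integral_one_sub_two_I_mul_cpow_neg_mul_exp hs, ← ofReal_mul]

theorem norm_limitDensity_le (hι : 5 ≤ Fintype.card ι) (d : ι → ℤ) {q : ℕ} [NeZero q]
    {a : ℤ} (ha : IsCoprime a (q : ℤ)) (hb : ∀ i, IsUnit (2 * b i : ZMod q)) (γ : ℝ) :
    ‖limitDensity b d q a γ‖ ≤ (∏ i, (√(b i))⁻¹) * arcWeight q γ ^ 5 := by
  have hq : (0 : ℝ) < q := by exact_mod_cast NeZero.pos q
  refine norm_prod_le_prod_mul_pow hι (fun i => by positivity) (arcWeight_nonneg q γ)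
    (arcWeight_le_one q γ) fun i => ?_
  have hunit : IsUnit (2 * (a * b i) : ZMod q) := by
    rw [mul_left_comm]
    exact (isUnit_intCast_of_isCoprime ha).mul (hb i)
  have hgauss := Real.le_sqrt_of_sq_le (norm_quadGaussSum_sq_le_of_isUnit hunit (a * d i))
  have hcpow : ‖(1 - 2 * I * γ : ℂ) ^ (1 / 2 : ℂ)‖ = (1 + 4 * γ ^ 2) ^ (1 / 4 : ℝ) := by
    have := norm_one_sub_two_I_mul_cpow γ (1 / 2)
    norm_num at this ⊢
    exact this
  rw [norm_div, norm_mul, norm_mul, hcpow, norm_real, Real.norm_of_nonneg (Real.sqrt_nonneg _),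
    Complex.norm_natCast, arcWeight, Real.rpow_neg (by positivity), Real.rpow_neg (by positivity),
    ← Real.sqrt_eq_rpow]
  calc _ ≤ √q / (√(b i) * q * (1 + 4 * γ ^ 2) ^ (1 / 4 : ℝ)) := by gcongr
    _ = √q / (√(b i) * (√q * √q) * (1 + 4 * γ ^ 2) ^ (1 / 4 : ℝ)) := by
        rw [Real.mul_self_sqrt hq.le]
    _ = (√(b i))⁻¹ * ((√q)⁻¹ * ((1 + 4 * γ ^ 2) ^ (1 / 4 : ℝ))⁻¹) := by
        have : √(q : ℝ) ≠ 0 := (Real.sqrt_pos.mpr hq).ne'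
        rw [div_eq_mul_inv]
        simp only [mul_inv]
        field_simp

theorem quadGaussSum_stdAddChar_eq_zero {q : ℕ} [NeZero q] {a : ℤ} (ha : IsCoprime a (q : ℤ))
    {m : ℕ} (hm : ¬ m.Coprime q) :
    quadGaussSum ZMod.stdAddChar ((a * m : ZMod q)) a = 0 := by
  have hq : 0 < q := NeZero.pos q
  set g := m.gcd q
  have hgq : g ∣ q := Nat.gcd_dvd_right m q
  have hg2 : 1 < g := by
    have : 0 < g := Nat.gcd_pos_of_pos_right m hq
    have : g ≠ 1 := hm
    omega
  refine quadGaussSum_eq_zero (w := ((q / g : ℕ) : ZMod q)) ?_ fun h => ?_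
  · have hdvd : q ∣ m * (q / g) := by
      rw [← Nat.mul_div_assoc _ hgq, mul_comm, Nat.mul_div_assoc _ (Nat.gcd_dvd_left m q)]
      exact dvd_mul_right _ _
    rw [mul_assoc, ← Nat.cast_mul, (ZMod.natCast_eq_zero_iff _ _).mpr hdvd, mul_zero]
  · rw [← (ZMod.stdAddChar (N := q)).map_zero_eq_one, ZMod.injective_stdAddChar.eq_iff,
      (isUnit_intCast_of_isCoprime ha).mul_right_eq_zero, ZMod.natCast_eq_zero_iff] at h
    exact (Nat.div_lt_self hq hg2).not_ge
      (Nat.le_of_dvd (Nat.div_pos (Nat.le_of_dvd hq hgq) (by omega)) h)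

theorem limitDensity_eq_zero {d : ι → ℤ} {q : ℕ} [NeZero q] {a : ℤ}
    (ha : IsCoprime a (q : ℤ)) {i : ι} (hd : d i = 1) (hi : ¬ (b i).Coprime q) (γ : ℝ) :
    limitDensity b d q a γ = 0 := by
  refine Finset.prod_eq_zero (Finset.mem_univ i) ?_
  rw [hd, Int.cast_one, mul_one, quadGaussSum_stdAddChar_eq_zero ha hi, zero_div]

theorem sum_integral_norm_limitDensity_le (hι : 5 ≤ Fintype.card ι) {d : ι → ℤ} {i₀ : ι}
    (hd : d i₀ = 1) {P : ℕ} (hP : ∀ k < P, ¬ (b i₀).Coprime (k + 2))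
    (hb : ∀ q : ℕ, (b i₀).Coprime q → ∀ i, (2 * b i).Coprime q) (k : ℕ) :
    ∑ a ∈ arcNumerators (k + 2), ∫ γ, ‖limitDensity b d (k + 2) a γ‖ ≤
      (∏ i, (√(b i))⁻¹) * (if k < P then 0 else
        arcConstant * ((k + 2 : ℕ) : ℝ) ^ (-(3 / 2) : ℝ)) := by
  by_cases hcop : (b i₀).Coprime (k + 2)
  · rw [if_neg fun hk => hP k hk hcop]
    refine sum_integral_norm_le_of_le_arcWeight (by positivity) (by omega) fun a ha γ =>
      norm_limitDensity_le hι d (mem_arcNumerators.mp ha).2 (fun i => ?_) γ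
    exact_mod_cast (ZMod.isUnit_iff_coprime (2 * b i) (k + 2)).mpr (hb _ hcop i)
  · have hzero (a : ℤ) (ha : a ∈ arcNumerators (k + 2)) :
        ∫ γ, ‖limitDensity b d (k + 2) a γ‖ = 0 := by
      simp_rw [limitDensity_eq_zero (mem_arcNumerators.mp ha).2 hd hcop, norm_zero,
        integral_zero]
    rw [Finset.sum_eq_zero hzero]
    have := arcConstant_nonneg
    positivity

theorem exists_summable_ite_and_tsum_lt {f : ℕ → ℝ} (hf : Summable f) {ε : ℝ} (hε : 0 < ε) :
    ∃ P : ℕ, (Summable fun k => if k < P then 0 else f k) ∧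
      ∑' k, (if k < P then 0 else f k) < ε := by
  obtain ⟨P, hP⟩ := ((tendsto_sum_nat_add f).eventually_lt_const hε).exists
  have hshift : (fun k => if k + P < P then 0 else f (k + P)) = fun k => f (k + P) := by
    funext k
    rw [if_neg (by omega)]
  have hsum : Summable fun k => if k < P then 0 else f k := by
    rw [← summable_nat_add_iff P, hshift]
    exact (summable_nat_add_iff P).mpr hf
  refine ⟨P, hsum, hP.trans_eq' ?_⟩
  rw [← hsum.sum_add_tsum_nat_add P, hshift,
    Finset.sum_eq_zero fun k hk => if_pos (Finset.mem_range.mp hk), zero_add]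

theorem exists_tsum_integral_norm_limitDensity_lt (hι : 5 ≤ Fintype.card ι) {a : ι → ℕ}
    (ha : ∀ i, 0 < a i) {d : ι → ℤ} {i₀ : ι} (hd : d i₀ = 1) {ε : ℝ} (hε : 0 < ε) :
    ∃ L > 0, ∑' k : ℕ, ∑ m ∈ arcNumerators (k + 2),
      ∫ γ, ‖limitDensity (fun i => L * a i) d (k + 2) m γ‖ < (∏ i, (√(L * a i : ℕ))⁻¹) * ε := by
  obtain ⟨P, hsum, hP⟩ :=
    exists_summable_ite_and_tsum_lt (summable_nat_add_two_rpow.mul_left arcConstant) hε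
  have hprod : 0 < ∏ i, a i := Finset.prod_pos fun i _ => ha i
  set L := 2 * (∏ i, a i) * (P + 1).factorial
  have hL0 : 0 < L := by positivity
  have hsmall (k : ℕ) (hk : k < P) : ¬ (L * a i₀).Coprime (k + 2) := fun hcop => by
    have hdvd : k + 2 ∣ L * a i₀ :=
      ((Nat.dvd_factorial (by omega) (by omega)).mul_left _).mul_right _
    have := Nat.dvd_one.mp (hcop ▸ Nat.dvd_gcd hdvd dvd_rfl)
    omega
  have hlarge (q : ℕ) (hcop : (L * a i₀).Coprime q) (i : ι) : (2 * (L * a i)).Coprime q := by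
    have hLq : L.Coprime q := hcop.coprime_mul_right
    have h2 : 2 ∣ L := Dvd.intro _ (mul_assoc _ _ _).symm
    have hai : a i ∣ L := ((Finset.dvd_prod_of_mem a (Finset.mem_univ i)).mul_left 2).mul_right _
    exact (hLq.of_dvd_left h2).mul_left (hLq.mul_left (hLq.of_dvd_left hai))
  have hle := sum_integral_norm_limitDensity_le (b := fun i => L * a i) hι hd hsmall hlarge
  have hsum' := hsum.mul_left (∏ i, (√(L * a i : ℕ))⁻¹)
  refine ⟨L, hL0, ?_⟩
  calc ∑' k : ℕ, ∑ m ∈ arcNumerators (k + 2),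
          ∫ γ, ‖limitDensity (fun i => L * a i) d (k + 2) m γ‖
      ≤ ∑' k : ℕ, (∏ i, (√(L * a i : ℕ))⁻¹) *
          (if k < P then 0 else arcConstant * ((k + 2 : ℕ) : ℝ) ^ (-(3 / 2) : ℝ)) :=
        (hsum'.of_nonneg_of_le (fun k => by positivity) hle).tsum_le_tsum hle hsum'
    _ < (∏ i, (√(L * a i : ℕ))⁻¹) * ε := by
        rw [tsum_mul_left]
        refine mul_lt_mul_of_pos_left hP (Finset.prod_pos fun i _ => ?_)
        have := Nat.mul_pos hL0 (ha i)
        positivity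

theorem exists_mul_rpow_le_ncard_quadricPoints (hι : 5 ≤ Fintype.card ι) {a : ι → ℕ}
    (ha : ∀ i, 0 < a i) {d : ι → ℤ} {i₀ : ι} (hd : d i₀ = 1) :
    ∃ L > 0, ∃ c > 0, ∀ᶠ n : ℕ in atTop, c * (n : ℝ) ^ ((Fintype.card ι : ℝ) / 2 - 1) ≤
      (quadricPoints (fun i => L * a i) d n).ncard := by
  obtain ⟨J, hJ0, hJ⟩ := exists_integral_limitDensity_one_zero_mul_exp_eq (ι := ι) (by omega)
  obtain ⟨L, hL, hlt⟩ := exists_tsum_integral_norm_limitDensity_lt hι ha hd hJ0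
  refine ⟨L, hL, exists_mul_rpow_le_ncard_of_tsum_lt hι (fun i => Nat.mul_pos hL (ha i)) d
    (hlt.trans_eq ?_)⟩
  rw [hJ, norm_real, Real.norm_of_nonneg (by positivity)]

end SingularSeries

section DiagonalForms

variable {ι : Type*} [Fintype ι]

theorem exists_mul_rpow_le_ncard_sum_mul_sq_eq (hι : 5 ≤ Fintype.card ι) {a : ι → ℕ}
    (ha : ∀ i, 0 < a i) (i₀ : ι) :
    ∃ M > 0, ∃ c > 0, ∀ᶠ k : ℕ in atTop, c * (k : ℝ) ^ ((Fintype.card ι : ℝ) / 2 - 1) ≤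
      {x : ι → ℤ | ∑ i, a i * x i ^ 2 = a i₀ + (M : ℕ) * (k : ℤ)}.ncard := by
  classical
  obtain ⟨L, hL, c, hc, hcount⟩ := exists_mul_rpow_le_ncard_quadricPoints hι ha
    (d := Pi.single i₀ 1) (Pi.single_eq_same i₀ 1)
  have ha₀ := ha i₀
  refine ⟨4 * a i₀ ^ 2 * L, by positivity, c, hc, hcount.mono fun k hk => hk.trans ?_⟩
  set K : ℤ := 2 * a i₀ * L with hK
  have hK0 : K ≠ 0 := by positivity
  have hfin (N : ℤ) : {x : ι → ℤ | ∑ i, a i * x i ^ 2 = N}.Finite := by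
    simpa [quadricPoints] using finite_quadricPoints ha 0 N
  refine Nat.cast_le.mpr (Set.ncard_le_ncard_of_injOn (fun t => Pi.single i₀ 1 + K • t)
    (fun t ht => ?_) (fun t _ t' _ h => smul_right_injective _ hK0 (add_left_cancel h)) (hfin _))
  have hterm (i : ι) : a i * (Pi.single i₀ 1 + K • t : ι → ℤ) i ^ 2 =
      (Pi.single i₀ (a i₀ : ℤ) : ι → ℤ) i + 2 * a i₀ * K *
        ((L * a i : ℕ) * t i ^ 2 + (Pi.single i₀ 1 : ι → ℤ) i * t i) := by
    obtain rfl | hi := eq_or_ne i i₀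
    · simp only [Pi.add_apply, Pi.smul_apply, Pi.single_eq_same, smul_eq_mul, hK]
      push_cast
      ring
    · simp only [Pi.add_apply, Pi.smul_apply, Pi.single_eq_of_ne hi, smul_eq_mul, hK]
      push_cast
      ring
  have ht' : ∑ i, ((L * a i : ℕ) * t i ^ 2 + (Pi.single i₀ 1 : ι → ℤ) i * t i) = (k : ℤ) := ht
  change ∑ i, a i * (Pi.single i₀ 1 + K • t : ι → ℤ) i ^ 2 = _
  rw [Finset.sum_congr rfl fun i _ => hterm i, Finset.sum_add_distrib, ← Finset.mul_sum, ht',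
    Finset.sum_pi_single', if_pos (Finset.mem_univ i₀), hK]
  push_cast
  ring

end DiagonalForms

section IntegralForms

variable {ι : Type*}

theorem exists_ne_zero_isOrthoᵢ [Finite ι] {B : LinearMap.BilinForm ℤ (ι → ℤ)} (hB : B.IsSymm) :
    ∃ w : ι → ι → ℤ, (∀ k, w k ≠ 0) ∧ B.IsOrthoᵢ w := by
  classical
  cases nonempty_fintype ι
  set G : Matrix ι ι ℤ := LinearMap.BilinForm.toMatrix' B
  have hG (x y : ι → ℤ) : B x y = x ⬝ᵥ G.mulVec y := by
    rw [← Matrix.toBilin'_apply', Matrix.toBilin'_toMatrix']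
  have hGsymm : G.IsSymm := (LinearMap.BilinForm.isSymm_toMatrix'_iff_isSymm).mpr hB
  set B' : LinearMap.BilinForm ℚ (ι → ℚ) := Matrix.toBilin' (G.map (Int.castRingHom ℚ)) with hB'
  have hcast (x y : ι → ℤ) : B' (Int.castRingHom ℚ ∘ x) (Int.castRingHom ℚ ∘ y) = B x y := by
    have hmul : (G.map (Int.castRingHom ℚ)).mulVec (Int.castRingHom ℚ ∘ y) =
        Int.castRingHom ℚ ∘ G.mulVec y :=
      funext fun i => (RingHom.map_mulVec _ G y i).symm
    rw [hG, hB', Matrix.toBilin'_apply', hmul, ← RingHom.map_dotProduct, eq_intCast]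
  have hsymm : LinearMap.IsSymm B' :=
    ⟨(Matrix.isSymm_toBilin'_iff_isSymm.mpr (hGsymm.map (Int.castRingHom ℚ))).eq⟩
  obtain ⟨v, hv⟩ := LinearMap.BilinForm.exists_orthogonal_basis hsymm
  have e : ι ≃ Fin (Module.finrank ℚ (ι → ℚ)) :=
    Fintype.equivOfCardEq (by simp)
  obtain ⟨D, hD⟩ := IsLocalization.exist_integer_multiples_of_finite (nonZeroDivisors ℤ)
    fun p : ι × ι => v (e p.1) p.2
  choose w hw using fun k i => hD (k, i)
  have hw' (k : ι) : Int.castRingHom ℚ ∘ w k = (D : ℤ) • v (e k) := funext fun i => hw k i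
  refine ⟨w, fun k hk => ?_, fun k l hkl => ?_⟩
  · have hzero : (D : ℤ) • v (e k) = 0 := by
      rw [← hw' k, hk]
      exact funext fun _ => map_zero _
    exact (smul_ne_zero (nonZeroDivisors.coe_ne_zero D) (v.ne_zero (e k))) hzero
  · have hkl' : B' (v (e k)) (v (e l)) = 0 := hv (e.injective.ne hkl)
    have hB0 : ((B (w k) (w l) : ℤ) : ℚ) = 0 := by
      rw [← hcast, hw', hw', map_zsmul, map_zsmul, LinearMap.smul_apply, hkl', smul_zero, smul_zero]
    exact Int.cast_eq_zero.mp hB0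

variable [Fintype ι] {Q : QuadraticForm ℤ (ι → ℤ)}

theorem map_sum_smul_of_isOrthoᵢ {w : ι → ι → ℤ} (hw : Q.polarBilin.IsOrthoᵢ w) (ξ : ι → ℤ) :
    Q (∑ k, ξ k • w k) = ∑ k, Q (w k) * ξ k ^ 2 := by
  classical
  have hpolar : QuadraticMap.polar Q (∑ k, ξ k • w k) (∑ k, ξ k • w k) =
      2 * ∑ k, Q (w k) * ξ k ^ 2 := by
    rw [← QuadraticMap.polarBilin_apply_apply, map_sum, Finset.mul_sum]
    refine Finset.sum_congr rfl fun k _ => ?_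
    rw [map_sum, LinearMap.sum_apply, Finset.sum_eq_single k]
    · simp only [map_smul, LinearMap.smul_apply, QuadraticMap.polarBilin_apply_apply,
        QuadraticMap.polar_self, smul_eq_mul, nsmul_eq_mul]
      push_cast
      ring
    · intro l _ hl
      rw [map_smul, map_smul, LinearMap.smul_apply, hw hl, smul_zero, smul_zero]
    · exact fun h => absurd (Finset.mem_univ k) h
  rw [QuadraticMap.polar_self, nsmul_eq_mul] at hpolar
  exact mul_left_cancel₀ two_ne_zero hpolar

theorem sum_smul_injective_of_isOrthoᵢ {w : ι → ι → ℤ} (hw : Q.polarBilin.IsOrthoᵢ w)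
    (hpos : ∀ k, 0 < Q (w k)) : Function.Injective fun ξ : ι → ℤ => ∑ k, ξ k • w k := by
  intro ξ ξ' h
  have hzero : ∑ k, Q (w k) * (ξ k - ξ' k) ^ 2 = 0 := by
    have := map_sum_smul_of_isOrthoᵢ hw (ξ - ξ')
    simp only [Pi.sub_apply, sub_smul, Finset.sum_sub_distrib] at this
    rw [← this, sub_eq_zero.mpr h, QuadraticMap.map_zero]
  funext k
  have hk := (Finset.sum_eq_zero_iff_of_nonneg fun k _ =>
    mul_nonneg (hpos k).le (sq_nonneg _)).mp hzero k (Finset.mem_univ k)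
  exact sub_eq_zero.mp (sq_eq_zero_iff.mp ((mul_eq_zero.mp hk).resolve_left (hpos k).ne'))

variable {κ : ℝ}

theorem pos_of_forall_mul_sq_norm_le (hκ : 0 < κ) (hQ : ∀ x, κ * ‖x‖ ^ 2 ≤ Q x) {x : ι → ℤ}
    (hx : x ≠ 0) : 0 < Q x := by
  have : 0 < ‖x‖ := norm_pos_iff.mpr hx
  exact Int.cast_pos.mp ((by positivity : 0 < κ * ‖x‖ ^ 2).trans_le (hQ x))

theorem finite_setOf_eq_of_forall_mul_sq_norm_le (hκ : 0 < κ) (hQ : ∀ x, κ * ‖x‖ ^ 2 ≤ Q x)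
    (N : ℤ) : {x | Q x = N}.Finite := by
  refine (isCompact_closedBall (0 : ι → ℤ) (√(N / κ))).finite_of_discrete.subset fun x hx => ?_
  rw [mem_closedBall_zero_iff]
  refine Real.le_sqrt_of_sq_le ((le_div_iff₀' hκ).mpr ?_)
  rw [← (show Q x = N from hx)]
  exact hQ x

theorem exists_mul_rpow_le_ncard_quadraticForm_eq (hι : 5 ≤ Fintype.card ι) (hκ : 0 < κ)
    (hQ : ∀ x, κ * ‖x‖ ^ 2 ≤ Q x) :
    ∃ M : ℕ, 0 < M ∧ ∃ n : ℤ, 0 < n ∧ ∃ c > 0, ∀ᶠ k : ℕ in atTop,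
      c * (k : ℝ) ^ ((Fintype.card ι : ℝ) / 2 - 1) ≤ {x | Q x = n + M * k}.ncard := by
  obtain ⟨w, hw0, hw⟩ := exists_ne_zero_isOrthoᵢ (B := Q.polarBilin)
    ⟨QuadraticMap.polar_comm Q⟩
  have hpos (k : ι) : 0 < Q (w k) := pos_of_forall_mul_sq_norm_le hκ hQ (hw0 k)
  lift Q ∘ w to ι → ℕ using fun k => (hpos k).le with a ha
  have ha' (k : ι) : (a k : ℤ) = Q (w k) := congrFun ha k
  obtain ⟨i₀⟩ : Nonempty ι := Fintype.card_pos_iff.mp (by omega)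
  obtain ⟨M, hM, c, hc, hcount⟩ := exists_mul_rpow_le_ncard_sum_mul_sq_eq hι (a := a)
    (fun k => by exact_mod_cast (hpos k).trans_eq (ha' k).symm) i₀
  refine ⟨M, hM, Q (w i₀), hpos i₀, c, hc, hcount.mono fun k hk => hk.trans ?_⟩
  refine Nat.cast_le.mpr (Set.ncard_le_ncard_of_injOn (fun ξ => ∑ k, ξ k • w k) (fun ξ hξ => ?_)
    (sum_smul_injective_of_isOrthoᵢ hw hpos).injOn
    (finite_setOf_eq_of_forall_mul_sq_norm_le hκ hQ _))
  change Q _ = _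
  rw [map_sum_smul_of_isOrthoᵢ hw, ← ha' i₀, ← (show _ = _ from hξ)]
  simp_rw [ha']

theorem exists_forall_polar_eq_mul_dotProduct (hpos : ∀ x, x ≠ 0 → 0 < Q x) :
    ∃ Δ : ℤ, 0 < Δ ∧ ∀ v, ∃ ω, ∀ x, QuadraticMap.polar Q ω x = Δ * (v ⬝ᵥ x) := by
  classical
  set G : Matrix ι ι ℤ := LinearMap.BilinForm.toMatrix' Q.polarBilin
  have hG (x y : ι → ℤ) : QuadraticMap.polar Q x y = x ⬝ᵥ G.mulVec y := by
    rw [← Matrix.toBilin'_apply', Matrix.toBilin'_toMatrix', QuadraticMap.polarBilin_apply_apply]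
  have hdet : G.det ≠ 0 := fun h => by
    obtain ⟨x, hx, hGx⟩ := Matrix.exists_mulVec_eq_zero_iff.mpr h
    have hself := hG x x
    rw [hGx, dotProduct_zero, QuadraticMap.polar_self, nsmul_eq_mul] at hself
    have := hpos x hx
    push_cast at hself
    omega
  refine ⟨|G.det|, abs_pos.mpr hdet, fun v => ⟨(G.det.sign • G.adjugate).vecMul v, fun x => ?_⟩⟩
  rw [hG, Matrix.dotProduct_mulVec, Matrix.vecMul_vecMul, Matrix.smul_mul, Matrix.adjugate_mul,
    smul_smul, Int.sign_mul_self_eq_abs, ← Matrix.dotProduct_mulVec, Matrix.smul_mulVec,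
    Matrix.one_mulVec, dotProduct_smul, smul_eq_mul]

theorem ncard_setOf_add_dotProduct_eq {v ω : ι → ℤ}
    (hω : ∀ x, QuadraticMap.polar Q ω x = v ⬝ᵥ x) (N : ℤ) :
    {u | Q u + v ⬝ᵥ u = N}.ncard = {x | Q x = N + Q ω}.ncard := by
  have hset : {u | Q u + v ⬝ᵥ u = N} = Equiv.addRight ω ⁻¹' {x | Q x = N + Q ω} := by
    ext u
    rw [Set.mem_preimage, Equiv.coe_addRight, Set.mem_ofPred_eq, Set.mem_ofPred_eq,
      QuadraticMap.map_add Q, QuadraticMap.polar_comm, hω, add_right_comm, add_left_inj]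
  rw [hset, Set.ncard_preimage_of_injective_subset_range (Equiv.injective _)
    ((Equiv.surjective _).range_eq.symm ▸ Set.subset_univ _)]

theorem exists_mul_rpow_le_ncard_add_dotProduct_eq (hι : 5 ≤ Fintype.card ι) (hκ : 0 < κ)
    (hQ : ∀ x, κ * ‖x‖ ^ 2 ≤ Q x) :
    ∃ m : ℤ, 0 < m ∧ ∃ n : ℤ, 0 < n ∧ ∃ c > 0, ∃ N₀ : ℤ, ∀ (v : ι → ℤ) (N : ℤ),
      (∀ i, m ∣ v i) → N ≡ n [ZMOD m] → N₀ ≤ N →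
      c * (N : ℝ) ^ ((Fintype.card ι : ℝ) / 2 - 1) ≤ {u | Q u + v ⬝ᵥ u = N}.ncard := by
  obtain ⟨M, hM, n, hn, c, hc, hcount⟩ := exists_mul_rpow_le_ncard_quadraticForm_eq hι hκ hQ
  obtain ⟨k₀, hk₀⟩ := eventually_atTop.mp hcount
  obtain ⟨Δ, hΔ, hpolar⟩ :=
    exists_forall_polar_eq_mul_dotProduct fun x => pos_of_forall_mul_sq_norm_le hκ hQ
  have hι' : (5 : ℝ) ≤ Fintype.card ι := by exact_mod_cast hι
  have hM' : (0 : ℤ) < M := by exact_mod_cast hM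
  refine ⟨Δ * M, by positivity, n, hn, c * (1 / (2 * M)) ^ ((Fintype.card ι : ℝ) / 2 - 1),
    by positivity, max (2 * n) (n + M * k₀), fun v N hv hN hN₀ => ?_⟩
  choose v' hv' using hv
  obtain ⟨ω, hω⟩ := hpolar v'
  have hMω (x : ι → ℤ) : QuadraticMap.polar Q ((M : ℤ) • ω) x = v ⬝ᵥ x := by
    rw [QuadraticMap.polar_smul_left, hω, show v = (Δ * M) • v' from funext hv', smul_dotProduct,
      smul_eq_mul, smul_eq_mul]
    ring
  obtain ⟨j, hj⟩ := hN.dvd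
  have hω0 : 0 ≤ M ^ 2 * Q ω := mul_nonneg (by positivity)
    (Int.cast_nonneg_iff (R := ℝ).mp ((by positivity : 0 ≤ κ * ‖ω‖ ^ 2).trans (hQ ω)))
  have hk : M * (M * Q ω - Δ * j) = N - n + M ^ 2 * Q ω := by linear_combination hj
  have hN₁ := (le_max_left _ _).trans hN₀
  have hN₂ := (le_max_right _ _).trans hN₀
  lift M * Q ω - Δ * j to ℕ using
    (pos_of_mul_pos_right (hk.symm ▸ by linarith) hM'.le).le with k
  have hkk₀ : k₀ ≤ k := by
    exact_mod_cast le_of_mul_le_mul_left (by linarith : M * (k₀ : ℤ) ≤ M * k) hM'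
  have hNk : 1 / (2 * M) * (N : ℝ) ≤ k := by
    rw [one_div_mul_eq_div, div_le_iff₀' (by positivity)]
    exact_mod_cast (by linarith : N ≤ 2 * M * k)
  have hN' : (0 : ℝ) ≤ N := by exact_mod_cast (by linarith : 0 ≤ N)
  have htarget : N + Q ((M : ℤ) • ω) = n + M * k := by
    rw [QuadraticMap.map_smul, smul_eq_mul]
    linear_combination -hk
  rw [ncard_setOf_add_dotProduct_eq hMω, htarget, mul_assoc, ← Real.mul_rpow (by positivity) hN']
  refine le_trans ?_ (hk₀ k hkk₀)
  gcongr
  linarith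

theorem abs_dotProduct_le_card_mul_norm_mul_norm (v u : ι → ℤ) :
    |((v ⬝ᵥ u : ℤ) : ℝ)| ≤ Fintype.card ι * (‖v‖ * ‖u‖) := by
  rw [← Int.norm_eq_abs, ← nsmul_eq_mul]
  exact (norm_sum_le _ _).trans (Finset.sum_le_card_nsmul _ _ _ fun i _ => (norm_mul_le _ _).trans
    (mul_le_mul (norm_le_pi_norm v i) (norm_le_pi_norm u i) (norm_nonneg _) (norm_nonneg _)))

theorem sq_norm_le_of_add_dotProduct_eq (hκ : 0 < κ) (hQ : ∀ x, κ * ‖x‖ ^ 2 ≤ Q x)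
    {u v : ι → ℤ} {N : ℤ} (hu : Q u + v ⬝ᵥ u = N) :
    ‖u‖ ^ 2 ≤ 2 / κ * |(N : ℝ)| + (Fintype.card ι / κ * ‖v‖) ^ 2 := by
  have hdot := (neg_le_abs _).trans (abs_dotProduct_le_card_mul_norm_mul_norm v u)
  have hN : (Q u : ℝ) + (v ⬝ᵥ u : ℤ) = N := by exact_mod_cast hu
  set s := Fintype.card ι / κ * ‖v‖ with hs
  have hs' : Fintype.card ι * (‖v‖ * ‖u‖) = κ * (s * ‖u‖) := by
    rw [hs]
    field_simp
  have hκu : κ * ‖u‖ ^ 2 ≤ |(N : ℝ)| + κ * (s * ‖u‖) := by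
    linarith [hQ u, le_abs_self (N : ℝ)]
  have hamgm : κ * (2 * (s * ‖u‖)) ≤ κ * (s ^ 2 + ‖u‖ ^ 2) := by
    gcongr
    linarith [two_mul_le_add_sq s ‖u‖]
  have hN' : 2 / κ * |(N : ℝ)| * κ = 2 * |(N : ℝ)| := by field_simp
  refine le_of_mul_le_mul_left ?_ hκ
  linarith

end IntegralForms

section HomogeneousPolynomials

variable {σ : Type*}

theorem exists_quadraticForm_apply_eq_eval {R : Type*} [CommRing R] {F : MvPolynomial σ R}
    (hF : F.IsHomogeneous 2) : ∃ Q : QuadraticForm R (σ → R), ∀ x, Q x = eval x F := by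
  have hlin (G : MvPolynomial σ R) (hG : G ∈ homogeneousSubmodule σ R 1) :
      ∃ f : (σ → R) →ₗ[R] R, ∀ x, f x = eval x G := by
    rw [homogeneousSubmodule_one_eq_span_X] at hG
    induction hG using Submodule.span_induction with
    | mem _ h => obtain ⟨i, rfl⟩ := h; exact ⟨LinearMap.proj i, fun x => by simp⟩
    | zero => exact ⟨0, fun x => by simp⟩
    | add _ _ _ _ hf hg =>
      obtain ⟨⟨f, hf⟩, g, hg⟩ := hf, hg
      exact ⟨f + g, fun x => by simp [hf, hg]⟩
    | smul a _ _ hf =>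
      obtain ⟨f, hf⟩ := hf
      exact ⟨a • f, fun x => by simp [hf]⟩
  rw [← mem_homogeneousSubmodule, ← homogeneousSubmodule_one_pow, pow_two] at hF
  induction hF using Submodule.mul_induction_on' with
  | mem_mul_mem G hG H hH =>
    obtain ⟨f, hf⟩ := hlin G hG
    obtain ⟨g, hg⟩ := hlin H hH
    exact ⟨QuadraticMap.linMulLin f g, fun x => by simp [hf, hg]⟩
  | add _ _ _ _ hP hQ =>
    obtain ⟨⟨P, hP⟩, Q, hQ⟩ := hP, hQ
    exact ⟨P + Q, fun x => by simp [hP, hQ]⟩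

theorem sum_support_eq_of_isHomogeneous {R : Type*} [CommSemiring R] {F : MvPolynomial σ R}
    {d : ℕ} (hF : F.IsHomogeneous d) {k : σ →₀ ℕ} (hk : k ∈ F.support) :
    ∑ i ∈ k.support, k i = d := by
  rw [← Finsupp.degree_apply, Finsupp.degree_eq_weight_one]
  exact hF (mem_support_iff.mp hk)

theorem eval_smul_of_isHomogeneous {R : Type*} [CommSemiring R] {F : MvPolynomial σ R} {d : ℕ}
    (hF : F.IsHomogeneous d) (t : R) (x : σ → R) : eval (t • x) F = t ^ d * eval x F := by
  rw [eval_eq, eval_eq, Finset.mul_sum]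
  refine Finset.sum_congr rfl fun k hk => ?_
  simp only [Pi.smul_apply, smul_eq_mul, mul_pow, Finset.prod_mul_distrib,
    Finset.prod_pow_eq_pow_sum, sum_support_eq_of_isHomogeneous hF hk]
  ring

theorem eval_zero_of_isHomogeneous {R : Type*} [CommSemiring R] {F : MvPolynomial σ R} {d : ℕ}
    (hF : F.IsHomogeneous d) (hd : d ≠ 0) : eval 0 F = 0 := by
  rw [← smul_zero (0 : R), eval_smul_of_isHomogeneous hF, zero_pow hd, zero_mul]

theorem eval_intCast_map (F : MvPolynomial σ ℤ) (x : σ → ℤ) :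
    eval (fun i => (x i : ℝ)) (map (Int.castRingHom ℝ) F) = (eval x F : ℤ) := by
  rw [eval_map]
  exact (eval₂_comp_left (Int.castRingHom ℝ) (RingHom.id ℤ) x F).symm

theorem dvd_eval_sub_eval {R : Type*} [CommRing R] (F : MvPolynomial σ R) {a : R} {x y : σ → R}
    (h : ∀ i, a ∣ x i - y i) : a ∣ eval x F - eval y F := by
  induction F using MvPolynomial.induction_on with
  | C b => simp
  | add F G hF hG =>
    rw [map_add, map_add, add_sub_add_comm]
    exact dvd_add hF hG
  | mul_X F i hF =>
    rw [map_mul, map_mul, eval_X, eval_X]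
    exact dvd_mul_sub_mul hF (h i)

theorem dvd_eval_of_isHomogeneous {R : Type*} [CommRing R] {F : MvPolynomial σ R} {d : ℕ}
    (hF : F.IsHomogeneous d) (hd : d ≠ 0) {a : R} {x : σ → R} (h : ∀ i, a ∣ x i) :
    a ∣ eval x F := by
  have hsub := dvd_eval_sub_eval F (y := 0) fun i => (sub_zero (x i)).symm ▸ h i
  rwa [eval_zero_of_isHomogeneous hF hd, sub_zero] at hsub

variable [Fintype σ]

theorem norm_eval_le_of_isHomogeneous {R : Type*} [NormedCommRing R] [NormOneClass R]
    {F : MvPolynomial σ R} {d : ℕ} (hF : F.IsHomogeneous d) (x : σ → R) :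
    ‖eval x F‖ ≤ (∑ k ∈ F.support, ‖F.coeff k‖) * ‖x‖ ^ d := by
  rw [eval_eq, Finset.sum_mul]
  refine (norm_sum_le _ _).trans (Finset.sum_le_sum fun k hk => (norm_mul_le _ _).trans ?_)
  rw [← sum_support_eq_of_isHomogeneous hF hk, ← Finset.prod_pow_eq_pow_sum]
  gcongr
  exact (Finset.norm_prod_le _ _).trans (Finset.prod_le_prod (fun _ _ => norm_nonneg _)
    fun i _ => (norm_pow_le _ _).trans (pow_le_pow_left₀ (norm_nonneg _) (norm_le_pi_norm x i) _))

theorem exists_mul_norm_pow_le_eval {F : MvPolynomial σ ℝ} {d : ℕ} (hF : F.IsHomogeneous d)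
    (hpos : ∀ v, v ≠ 0 → 0 < eval v F) :
    ∃ κ > 0, ∀ v, v ≠ 0 → κ * ‖v‖ ^ d ≤ eval v F := by
  obtain ⟨κ, hκ, hle⟩ := (isCompact_sphere (0 : σ → ℝ) 1).exists_forall_le'
    (continuous_eval F).continuousOn fun v hv => hpos v (ne_zero_of_mem_unit_sphere ⟨v, hv⟩)
  refine ⟨κ, hκ, fun v hv => ?_⟩
  have hv' := norm_pos_iff.mpr hv
  have hunit : ‖v‖⁻¹ • v ∈ Metric.sphere (0 : σ → ℝ) 1 := by
    rw [mem_sphere_zero_iff_norm, norm_smul, norm_inv, norm_norm, inv_mul_cancel₀ hv'.ne']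
  have h := hle _ hunit
  rwa [eval_smul_of_isHomogeneous hF, inv_pow, inv_mul_eq_div, le_div_iff₀ (by positivity)] at h

theorem norm_intCast_pi (x : σ → ℤ) : ‖(fun i => (x i : ℝ))‖ = ‖x‖ := rfl

theorem exists_mul_norm_sq_le_eval {F : MvPolynomial σ ℤ} (hF : F.IsHomogeneous 2)
    (hpos : ∀ v : σ → ℝ, v ≠ 0 → 0 < aeval v F) :
    ∃ κ > 0, ∀ x : σ → ℤ, κ * ‖x‖ ^ 2 ≤ (eval x F : ℤ) := by
  obtain ⟨κ, hκ, hle⟩ := exists_mul_norm_pow_le_eval (hF.map (Int.castRingHom ℝ)) fun v hv =>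
    (hpos v hv).trans_eq (eval_map _ _ _).symm
  refine ⟨κ, hκ, fun x => ?_⟩
  obtain rfl | hx := eq_or_ne x 0
  · rw [eval_zero_of_isHomogeneous hF two_ne_zero, norm_zero, zero_pow two_ne_zero,
      mul_zero, Int.cast_zero]
  · rw [← norm_intCast_pi, ← eval_intCast_map]
    exact hle _ fun h => hx (funext fun i => Int.cast_eq_zero.mp (congrFun h i))

theorem exists_eval_le_neg_mul_pow {E : MvPolynomial σ ℝ} {d : ℕ} (hE : E.IsHomogeneous d)
    {ζ : σ → ℝ} (hζ : eval ζ E < 0) :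
    ∃ δ > 0, ∃ c > 0, ∀ Y > 0, ∀ x, ‖x - Y • ζ‖ ≤ δ * Y → eval x E ≤ -(c * Y ^ d) := by
  obtain ⟨δ, hδ, hball⟩ := Metric.nhds_basis_closedBall.eventually_iff.mp
    ((continuous_eval E).continuousAt.eventually_lt_const (by linarith : eval ζ E < eval ζ E / 2))
  refine ⟨δ, hδ, -(eval ζ E / 2), by linarith, fun Y hY x hx => ?_⟩
  have hmem : Y⁻¹ • x ∈ Metric.closedBall ζ δ := by
    rw [mem_closedBall_iff_norm, ← inv_smul_smul₀ hY.ne' ζ, ← smul_sub, norm_smul, norm_inv,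
      Real.norm_of_nonneg hY.le, inv_mul_eq_div, div_le_iff₀ hY]
    exact hx
  calc eval x E = Y ^ d * eval (Y⁻¹ • x) E := by
        rw [← eval_smul_of_isHomogeneous hE, smul_inv_smul₀ hY.ne']
    _ ≤ Y ^ d * (eval ζ E / 2) := by
        gcongr
        exact (hball hmem).le
    _ = _ := by ring

theorem exists_eventually_norm_le_and_mul_pow_le_neg_eval {E : MvPolynomial σ ℤ} {d : ℕ}
    (hE : E.IsHomogeneous d) {ζ : σ → ℤ} (hζ : eval ζ E < 0) (x₀ : σ → ℤ) {D : ℤ} (hD : 0 < D) :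
    ∃ δ > 0, ∃ c > 0, ∃ C > 0, ∀ᶠ Y : ℕ in atTop, ∀ x : σ → ℤ, ‖x - (Y : ℤ) • ζ‖ ≤ δ * Y →
      ‖x₀ + D • x‖ ≤ C * Y ∧ c * (Y : ℝ) ^ d ≤ -(eval (x₀ + D • x) E : ℤ) := by
  have hζ' : eval (fun i => (ζ i : ℝ)) (map (Int.castRingHom ℝ) E) < 0 := by
    rw [eval_intCast_map]
    exact_mod_cast hζ
  obtain ⟨δ, hδ, c, hc, hneg⟩ := exists_eval_le_neg_mul_pow (hE.map (Int.castRingHom ℝ)) hζ'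
  have hD' : (0 : ℝ) < D := by exact_mod_cast hD
  have hx₀ : ∀ᶠ Y : ℕ in atTop, ‖x₀‖ ≤ δ * D / 2 * Y :=
    (tendsto_natCast_atTop_atTop.const_mul_atTop (by positivity)).eventually_ge_atTop _
  refine ⟨δ / 2, by positivity, c * D ^ d, by positivity, D * (δ + ‖ζ‖), by positivity,
    hx₀.mp ((eventually_gt_atTop 0).mono fun Y hY hx₀ x hx => ?_)⟩
  have hdist : ‖x₀ + D • x - (D * Y) • ζ‖ ≤ δ * (D * Y) := by
    calc ‖x₀ + D • x - (D * Y) • ζ‖ = ‖x₀ + D • (x - (Y : ℤ) • ζ)‖ := by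
          rw [smul_sub, smul_smul, add_sub_assoc]
      _ ≤ ‖x₀‖ + D * ‖x - (Y : ℤ) • ζ‖ := by
          refine (norm_add_le _ _).trans_eq ?_
          rw [norm_smul, Int.norm_eq_abs, abs_of_pos hD']
      _ ≤ δ * D / 2 * Y + D * (δ / 2 * Y) := by gcongr
      _ = δ * (D * Y) := by ring
  constructor
  · calc ‖x₀ + D • x‖ ≤ ‖x₀ + D • x - (D * Y) • ζ‖ + ‖(D * Y) • ζ‖ := norm_le_norm_sub_add _ _
      _ ≤ δ * (D * Y) + D * Y * ‖ζ‖ := by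
          gcongr
          rw [norm_smul, Int.norm_eq_abs, abs_of_nonneg (by positivity)]
          push_cast
          rfl
      _ = _ := by ring
  · rw [mul_assoc, ← mul_pow, ← eval_intCast_map, le_neg]
    refine hneg (D * Y) (by positivity) _ (le_of_eq_of_le ?_ hdist)
    rw [← norm_intCast_pi]
    congr 1
    funext i
    simp

end HomogeneousPolynomials

section LatticePoints

theorem mul_ncard_le_ncard_of_le_ncard_fiber {α β : Type*} {S : Set (α × β)} (hS : S.Finite)
    {Z : Set β} {c : ℝ} (hfiber : ∀ z ∈ Z, c ≤ {u | (u, z) ∈ S}.ncard) :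
    c * Z.ncard ≤ S.ncard := by
  classical
  obtain hZ | hZ := Z.infinite_or_finite
  · simp [hZ.ncard]
  lift S to Finset (α × β) using hS
  lift Z to Finset β using hZ
  have hcard (z : β) : {u | (u, z) ∈ (S : Set (α × β))}.ncard ≤
      (S.bipartiteAbove (fun z p => p.2 = z) z).card := by
    rw [← Set.ncard_coe_finset]
    exact Set.ncard_le_ncard_of_injOn (fun u => (u, z))
      (fun u hu => Finset.mem_coe.mpr (Finset.mem_filter.mpr ⟨hu, rfl⟩))
      (fun u _ u' _ h => congrArg Prod.fst h) (Finset.finite_toSet _)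
  have hdouble := Finset.card_nsmul_le_card_nsmul (s := Z) (t := S) (n := (1 : ℝ))
    (fun z p => p.2 = z) (fun z hz => (hfiber z hz).trans (Nat.cast_le.mpr (hcard z)))
    fun p _ => by
      rw [Nat.cast_le_one]
      exact Finset.card_le_one.mpr fun z hz z' hz' =>
        (Finset.mem_filter.mp hz).2.symm.trans (Finset.mem_filter.mp hz').2
  rwa [nsmul_eq_mul, nsmul_one, mul_comm, ← Set.ncard_coe_finset, ← Set.ncard_coe_finset] at hdouble

variable {κ : Type*} [Fintype κ]

theorem pow_card_le_ncard_closedBall (z : κ → ℤ) {t : ℝ} (ht : 0 ≤ t) :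
    t ^ Fintype.card κ ≤ (Metric.closedBall z t).ncard := by
  classical
  have hball : Metric.closedBall z t =
      Fintype.piFinset fun i => Finset.Icc ⌈(z i : ℝ) - t⌉ ⌊(z i : ℝ) + t⌋ := by
    rw [closedBall_pi z ht, Fintype.coe_piFinset]
    simp_rw [Int.closedBall_eq_Icc, Finset.coe_Icc]
  have hside (i : κ) : t ≤ (Finset.Icc ⌈(z i : ℝ) - t⌉ ⌊(z i : ℝ) + t⌋).card := by
    have hfloor : 0 ≤ ⌊t⌋ := Int.floor_nonneg.mpr ht
    have hcard : ((Finset.Icc ⌈(z i : ℝ) - t⌉ ⌊(z i : ℝ) + t⌋).card : ℤ) = 2 * ⌊t⌋ + 1 := by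
      rw [Int.card_Icc, Int.floor_intCast_add, sub_eq_add_neg (z i : ℝ), Int.ceil_intCast_add,
        Int.ceil_neg]
      omega
    rw [← Int.cast_natCast, hcard]
    exact (Int.lt_floor_add_one t).le.trans (by exact_mod_cast (by omega))
  rw [hball, Set.ncard_coe_finset, Fintype.card_piFinset]
  push_cast
  rw [← Finset.card_univ, ← Finset.prod_const]
  exact Finset.prod_le_prod (fun _ _ => ht) fun i _ => hside i

theorem mul_pow_card_le_ncard_of_le_ncard_fiber {α β : Type*} {S : Set (α × β)} (hS : S.Finite)
    {f : (κ → ℤ) → β} (hf : Function.Injective f) {z : κ → ℤ} {t c : ℝ} (ht : 0 ≤ t) (hc : 0 ≤ c)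
    (hfiber : ∀ p ∈ Metric.closedBall z t, c ≤ {u | (u, f p) ∈ S}.ncard) :
    c * t ^ Fintype.card κ ≤ S.ncard :=
  calc c * t ^ Fintype.card κ ≤ c * (f '' Metric.closedBall z t).ncard := by
        rw [Set.ncard_image_of_injective _ hf]
        gcongr
        exact pow_card_le_ncard_closedBall z ht
    _ ≤ S.ncard := mul_ncard_le_ncard_of_le_ncard_fiber hS (Set.forall_mem_image.mpr hfiber)

end LatticePoints

theorem exists_eventually_mul_rpow_le_of_le_mul_rpow {f : ℝ → ℝ} {c a θ e : ℝ} (hc : 0 < c)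
    (ha : 0 < a) (hθ : 0 < θ) (he : 0 ≤ e)
    (h : ∀ᶠ Y : ℕ in atTop, ∀ B ≥ (1 : ℝ), Y ≤ a * B ^ θ → c * (Y : ℝ) ^ e ≤ f B) :
    ∃ c > 0, ∀ᶠ B in atTop, c * B ^ (θ * e) ≤ f B := by
  have htend : Tendsto (fun B : ℝ => a * B ^ θ) atTop atTop :=
    (tendsto_rpow_atTop hθ).const_mul_atTop ha
  refine ⟨c * (a / 2) ^ e, by positivity, ?_⟩
  filter_upwards [(tendsto_nat_floor_atTop.comp htend).eventually h,
    htend.eventually_ge_atTop 1, eventually_ge_atTop 1] with B hfloor hone hB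
  have hhalf : a * B ^ θ / 2 ≤ ⌊a * B ^ θ⌋₊ := by
    have := Nat.lt_floor_add_one (a * B ^ θ)
    have : (1 : ℝ) ≤ ⌊a * B ^ θ⌋₊ := by exact_mod_cast Nat.le_floor (by exact_mod_cast hone)
    linarith
  calc c * (a / 2) ^ e * B ^ (θ * e) = c * (a * B ^ θ / 2) ^ e := by
        rw [Real.rpow_mul (by positivity), mul_assoc, ← Real.mul_rpow
          (by positivity) (by positivity),
          div_mul_eq_mul_div]
    _ ≤ c * (⌊a * B ^ θ⌋₊ : ℝ) ^ e := by gcongr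
    _ ≤ f B := hfloor B hB (Nat.floor_le (by positivity))

section CubicSlices

variable {κ : Type*} {E : MvPolynomial (Option κ) ℤ}

theorem exists_eval_elim'_zero_neg (hE : E.IsHomogeneous 3) {z : κ → ℤ}
    (hz : eval (Option.elim' 0 z) E ≠ 0) : ∃ z₀ : κ → ℤ, eval (Option.elim' 0 z₀) E < 0 := by
  obtain hneg | hpos := lt_or_gt_of_ne hz
  · exact ⟨z, hneg⟩
  · have hsmul : Option.elim' 0 (-z) = (-1 : ℤ) • Option.elim' 0 z := by
      funext i
      cases i <;> simp
    refine ⟨-z, ?_⟩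
    rw [hsmul, eval_smul_of_isHomogeneous hE]
    linarith

theorem exists_forall_dvd_eval_elim' (hE : E.IsHomogeneous 3) {z₀ : κ → ℤ}
    (hz₀ : eval (Option.elim' 0 z₀) E < 0) {m n : ℤ} (hm : 0 < m) (hn : 0 < n) :
    ∃ s > 0, m ∣ s ∧ ∃ T, m ∣ T ∧ ∀ p : κ → ℤ,
      s * m ∣ eval (Option.elim' s (T • z₀ + (s * m) • p)) E + s * n := by
  obtain ⟨g, hg, hEg⟩ : ∃ g : ℤ, 0 < g ∧ eval (Option.elim' 0 z₀) E = -g :=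
    ⟨_, neg_pos.mpr hz₀, (neg_neg _).symm⟩
  set T := m * n with hT
  set s := g * T ^ 2 * m with hs
  refine ⟨s, by positivity, Dvd.intro_left _ rfl, T, Dvd.intro _ rfl, fun p => ?_⟩
  have hshift : s * m ∣ eval (Option.elim' s (T • z₀ + (s * m) • p)) E -
      eval (Option.elim' s (T • z₀)) E := by
    refine dvd_eval_sub_eval E fun i => ?_
    cases i <;> simp
  have hscale : eval (Option.elim' s (T • z₀)) E =
      T ^ 3 * eval (Option.elim' (g * T * m) z₀) E := by
    rw [← eval_smul_of_isHomogeneous hE]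
    congr 2
    funext i
    cases i
    · simp only [Option.elim'_none, Pi.smul_apply, smul_eq_mul, hs]
      ring
    · simp
  obtain ⟨d, hd⟩ : g * T * m ∣ eval (Option.elim' (g * T * m) z₀) E - -g := by
    rw [← hEg]
    refine dvd_eval_sub_eval E fun i => ?_
    cases i <;> simp
  have hray : eval (Option.elim' s (T • z₀)) E + s * n = s * m * (T * n * d) := by
    rw [hscale, sub_eq_iff_eq_add.mp hd, hs, hT]
    ring
  have hsum := dvd_add hshift (Dvd.intro _ hray.symm)
  rwa [← add_assoc, sub_add_cancel] at hsum

variable {ι : Type*} [Fintype ι] {Q : QuadraticForm ℤ (ι → ℤ)}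
  {l : ι → MvPolynomial (Option κ) ℤ}

/-- The integral points `(u, z)` on the slice `y₁ = s` of the cubic
`y₁ (Q(u) + ∑ᵢ uᵢ lᵢ(y₁, z)) + E(y₁, z) = 0`. The variables `(y₁, z)` are indexed by `Option κ`, the
index of `y₁` being `none`. -/
def cubicSlice (Q : QuadraticForm ℤ (ι → ℤ)) (l : ι → MvPolynomial (Option κ) ℤ)
    (E : MvPolynomial (Option κ) ℤ) (s : ℤ) : Set ((ι → ℤ) × (κ → ℤ)) :=
  {p | s * (Q p.1 + (fun i => eval (Option.elim' s p.2) (l i)) ⬝ᵥ p.1) +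
    eval (Option.elim' s p.2) E = 0}

theorem setOf_mem_cubicSlice_eq {s N : ℤ} (hs : s ≠ 0) {z : κ → ℤ}
    (hN : eval (Option.elim' s z) E = -(s * N)) :
    {u | (u, z) ∈ cubicSlice Q l E s} =
      {u | Q u + (fun i => eval (Option.elim' s z) (l i)) ⬝ᵥ u = N} := by
  ext u
  change _ + eval (Option.elim' s z) E = 0 ↔ _
  rw [hN, add_neg_eq_zero, mul_right_inj' hs]
  rfl

theorem exists_mul_rpow_le_ncard_cubicSlice_fiber (hι : 5 ≤ Fintype.card ι) {δ : ℝ} (hδ : 0 < δ)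
    (hQ : ∀ x, δ * ‖x‖ ^ 2 ≤ Q x) (hl : ∀ i, (l i).IsHomogeneous 1) (hE : E.IsHomogeneous 3)
    {z₀ : κ → ℤ} (hz₀ : eval (Option.elim' 0 z₀) E < 0) :
    ∃ s > 0, ∃ T : ℤ, ∃ D : ℤ, 0 < D ∧ ∃ c > 0, ∃ N₀ : ℤ, ∀ (p : κ → ℤ) (N : ℤ),
      eval (Option.elim' s (T • z₀ + D • p)) E = -N → N₀ ≤ N →
      c * (N : ℝ) ^ ((Fintype.card ι : ℝ) / 2 - 1) ≤
        {u | (u, T • z₀ + D • p) ∈ cubicSlice Q l E s}.ncard := by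
  obtain ⟨m, hm, n, hn, c, hc, N₀, hcount⟩ :=
    exists_mul_rpow_le_ncard_add_dotProduct_eq hι hδ hQ
  obtain ⟨s, hs, hms, T, hmT, hdvd⟩ := exists_forall_dvd_eval_elim' hE hz₀ hm hn
  refine ⟨s, hs, T, s * m, by positivity, c * (1 / s) ^ ((Fintype.card ι : ℝ) / 2 - 1),
    by positivity, max 0 (s * N₀), fun p N' hN' hN₀ => ?_⟩
  set z := T • z₀ + (s * m) • p
  have hE' := hdvd p
  rw [hN'] at hE'
  obtain ⟨N, rfl⟩ : s ∣ N' :=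
    (dvd_neg.mp ((Int.dvd_add_left (Dvd.intro _ rfl)).mp ((Dvd.intro _ rfl).trans hE')))
  have hmod : N ≡ n [ZMOD m] := by
    rw [Int.modEq_iff_dvd, ← mul_dvd_mul_iff_left hs.ne', mul_sub, sub_eq_neg_add]
    exact hE'
  have hmz (o : Option κ) : m ∣ Option.elim' s z o := by
    cases o
    · exact hms
    · exact dvd_add (hmT.mul_right _) ((Dvd.intro_left _ rfl).mul_right _)
  have hNs : ((s * N : ℤ) : ℝ) * (1 / s) = N := by
    have : (s : ℝ) ≠ 0 := by exact_mod_cast hs.ne'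
    push_cast
    field_simp
  have hNs0 : (0 : ℝ) ≤ (s * N : ℤ) := by exact_mod_cast (le_max_left _ _).trans hN₀
  rw [mul_assoc, mul_comm (_ ^ _), ← Real.mul_rpow hNs0 (by positivity), hNs,
    setOf_mem_cubicSlice_eq hs.ne' hN']
  exact hcount _ N (fun i => dvd_eval_of_isHomogeneous (hl i) one_ne_zero hmz) hmod
    (le_of_mul_le_mul_left ((le_max_right _ _).trans hN₀) hs)

theorem elim'_add_smul (s T D : ℤ) (z p : κ → ℤ) :
    Option.elim' s (T • z + D • p) = Option.elim' s (T • z) + D • Option.elim' 0 p := by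
  funext i
  cases i <;> simp

variable [Fintype κ]

theorem norm_le_norm_elim' (s : ℤ) (z : κ → ℤ) : ‖z‖ ≤ ‖Option.elim' s z‖ :=
  (pi_norm_le_iff_of_nonneg (norm_nonneg _)).mpr fun i =>
    norm_le_pi_norm (Option.elim' s z) (some i)

theorem exists_sq_norm_le_of_mem_cubicSlice {δ : ℝ} (hδ : 0 < δ)
    (hQ : ∀ x, δ * ‖x‖ ^ 2 ≤ Q x) (hl : ∀ i, (l i).IsHomogeneous 1) (hE : E.IsHomogeneous 3) :
    ∃ C > 0, ∀ s ≠ 0, ∀ p ∈ cubicSlice Q l E s, ‖p.1‖ ^ 2 ≤ C * ‖Option.elim' s p.2‖ ^ 3 := by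
  set A := ∑ k ∈ E.support, ‖E.coeff k‖
  set L := ∑ i, ∑ k ∈ (l i).support, ‖(l i).coeff k‖
  set r := (Fintype.card ι : ℝ)
  refine ⟨2 / δ * A + (r / δ * L) ^ 2 + 1, by positivity, fun s hs p hp => ?_⟩
  set w := Option.elim' s p.2
  set v := fun i => eval w (l i)
  set N := Q p.1 + v ⬝ᵥ p.1 with hN
  have hw : 1 ≤ ‖w‖ :=
    (Int.norm_eq_abs s ▸ by exact_mod_cast Int.one_le_abs hs : 1 ≤ ‖s‖).trans
      (norm_le_pi_norm w none)
  have hp' : s * N = -eval w E := eq_neg_of_add_eq_zero_left hp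
  have hNE : |(N : ℝ)| ≤ A * ‖w‖ ^ 3 := by
    refine le_trans ?_ (norm_eval_le_of_isHomogeneous hE w)
    rw [← norm_neg, ← hp', Int.norm_eq_abs]
    exact_mod_cast (abs_mul s N).symm ▸ le_mul_of_one_le_left (abs_nonneg N) (Int.one_le_abs hs)
  have hv : ‖v‖ ≤ L * ‖w‖ := by
    refine (pi_norm_le_iff_of_nonneg (by positivity)).mpr fun i => ?_
    refine (norm_eval_le_of_isHomogeneous (hl i) w).trans ?_
    rw [pow_one]
    gcongr
    exact Finset.single_le_sum (f := fun i => ∑ k ∈ (l i).support, ‖(l i).coeff k‖)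
      (fun i _ => by positivity) (Finset.mem_univ i)
  calc ‖p.1‖ ^ 2 ≤ 2 / δ * |(N : ℝ)| + (r / δ * ‖v‖) ^ 2 :=
        sq_norm_le_of_add_dotProduct_eq hδ hQ hN.symm
    _ ≤ 2 / δ * (A * ‖w‖ ^ 3) + (r / δ * (L * ‖w‖)) ^ 2 := by gcongr
    _ = 2 / δ * A * ‖w‖ ^ 3 + (r / δ * L) ^ 2 * ‖w‖ ^ 2 := by ring
    _ ≤ 2 / δ * A * ‖w‖ ^ 3 + (r / δ * L) ^ 2 * ‖w‖ ^ 3 := by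
        gcongr
        norm_num
    _ ≤ _ := by
        rw [add_mul, add_mul]
        linarith [pow_nonneg (norm_nonneg w) 3]

theorem norm_elim'_zero (z : κ → ℤ) : ‖Option.elim' 0 z‖ = ‖z‖ :=
  le_antisymm
    ((pi_norm_le_iff_of_nonneg (norm_nonneg z)).mpr fun i => by
      cases i
      · simp
      · exact norm_le_pi_norm z _)
    (norm_le_norm_elim' 0 z)

theorem exists_eventually_norm_le_and_mul_pow_le_neg_eval_elim' (hE : E.IsHomogeneous 3)
    {z₀ : κ → ℤ} (hz₀ : eval (Option.elim' 0 z₀) E < 0) (s T : ℤ) {D : ℤ} (hD : 0 < D) :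
    ∃ ε > 0, ∃ c > 0, ∃ C > 0, ∀ᶠ Y : ℕ in atTop, ∀ p ∈ Metric.closedBall ((Y : ℤ) • z₀) (ε * Y),
      ‖Option.elim' s (T • z₀ + D • p)‖ ≤ C * Y ∧
        c * (Y : ℝ) ^ 3 ≤ -(eval (Option.elim' s (T • z₀ + D • p)) E : ℤ) := by
  obtain ⟨ε, hε, c, hc, C, hC, hray⟩ :=
    exists_eventually_norm_le_and_mul_pow_le_neg_eval hE hz₀ (Option.elim' s (T • z₀)) hD
  refine ⟨ε, hε, c, hc, C, hC, hray.mono fun Y hY p hp => ?_⟩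
  rw [elim'_add_smul]
  refine hY _ (le_of_eq_of_le ?_ (mem_closedBall_iff_norm.mp hp))
  rw [← norm_elim'_zero (p - _)]
  congr 1
  funext i
  cases i <;> simp

theorem exists_mem_closedBall_of_mem_cubicSlice {δ : ℝ} (hδ : 0 < δ)
    (hQ : ∀ x, δ * ‖x‖ ^ 2 ≤ Q x) (hl : ∀ i, (l i).IsHomogeneous 1) (hE : E.IsHomogeneous 3) :
    ∃ K > 0, ∀ s ≠ 0, ∀ B ≥ 1, ∀ p ∈ cubicSlice Q l E s,
      K * ‖Option.elim' s p.2‖ ^ 3 ≤ B ^ 2 → p ∈ Metric.closedBall 0 B := by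
  obtain ⟨K, hK, hsize⟩ := exists_sq_norm_le_of_mem_cubicSlice hδ hQ hl hE
  refine ⟨K + 1, by positivity, fun s hs B hB p hp hpB => ?_⟩
  have hw : 0 ≤ ‖Option.elim' s p.2‖ ^ 3 := by positivity
  rw [add_one_mul] at hpB
  refine mem_closedBall_zero_iff.mpr (max_le ?_ ((norm_le_norm_elim' s p.2).trans ?_))
  · refine (pow_le_pow_iff_left₀ (norm_nonneg _) (by positivity) two_ne_zero).mp ?_
    exact (hsize s hs p hp).trans (by linarith)
  · refine (pow_le_pow_iff_left₀ (norm_nonneg _) (by positivity) three_ne_zero).mp ?_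
    calc ‖Option.elim' s p.2‖ ^ 3 ≤ B ^ 2 := by linarith [mul_nonneg hK.le hw]
      _ ≤ B ^ 3 := pow_le_pow_right₀ hB (by norm_num)

theorem exists_eventually_mul_rpow_le_ncard_cubicSlice_inter_closedBall_fiber
    (hι : 5 ≤ Fintype.card ι) {δ : ℝ} (hδ : 0 < δ) (hQ : ∀ x, δ * ‖x‖ ^ 2 ≤ Q x)
    (hl : ∀ i, (l i).IsHomogeneous 1) (hE : E.IsHomogeneous 3)
    {z₀ : κ → ℤ} (hz₀ : eval (Option.elim' 0 z₀) E < 0) :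
    ∃ s : ℤ, ∃ f : (κ → ℤ) → (κ → ℤ), Function.Injective f ∧ ∃ ε > 0, ∃ c > 0, ∃ K > 0,
      ∀ᶠ Y : ℕ in atTop, ∀ B ≥ (1 : ℝ), K * (Y : ℝ) ^ 3 ≤ B ^ 2 →
      ∀ p ∈ Metric.closedBall ((Y : ℤ) • z₀) (ε * Y),
      c * ((Y : ℝ) ^ 3) ^ ((Fintype.card ι : ℝ) / 2 - 1) ≤
        {u | (u, f p) ∈ cubicSlice Q l E s ∩ Metric.closedBall 0 B}.ncard := by
  obtain ⟨s, hs, T, D, hD, c₁, hc₁, N₀, hfiber⟩ :=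
    exists_mul_rpow_le_ncard_cubicSlice_fiber hι hδ hQ hl hE hz₀
  obtain ⟨K, hK, hsize⟩ := exists_mem_closedBall_of_mem_cubicSlice hδ hQ hl hE
  obtain ⟨ε, hε, c₂, hc₂, C, hC, hray⟩ :=
    exists_eventually_norm_le_and_mul_pow_le_neg_eval_elim' hE hz₀ s T hD
  have hlarge : ∀ᶠ Y : ℕ in atTop, (N₀ : ℝ) ≤ c₂ * (Y : ℝ) ^ 3 :=
    (((tendsto_pow_atTop three_ne_zero).comp
      tendsto_natCast_atTop_atTop).const_mul_atTop hc₂).eventually_ge_atTop _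
  have he : (0 : ℝ) ≤ (Fintype.card ι : ℝ) / 2 - 1 := by
    have : (5 : ℝ) ≤ Fintype.card ι := by exact_mod_cast hι
    linarith
  refine ⟨s, fun p => T • z₀ + D • p,
    fun p p' h => smul_right_injective _ hD.ne' (add_left_cancel h), ε, hε,
    c₁ * c₂ ^ ((Fintype.card ι : ℝ) / 2 - 1), by positivity, K * C ^ 3, by positivity, ?_⟩
  filter_upwards [hray, hlarge] with Y hray hlarge B hB hYB p hp
  obtain ⟨hnorm, hneg⟩ := hray p hp
  have hball (u : ι → ℤ) (hu : (u, T • z₀ + D • p) ∈ cubicSlice Q l E s) :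
      (u, T • z₀ + D • p) ∈ Metric.closedBall 0 B := by
    refine hsize s hs.ne' B hB _ hu (le_trans ?_ hYB)
    rw [mul_assoc, ← mul_pow]
    gcongr
  have hfibereq : {u | (u, T • z₀ + D • p) ∈ cubicSlice Q l E s ∩ Metric.closedBall 0 B} =
      {u | (u, T • z₀ + D • p) ∈ cubicSlice Q l E s} :=
    Set.ext fun u => and_iff_left_of_imp (hball u)
  rw [hfibereq, mul_assoc, ← Real.mul_rpow hc₂.le (by positivity)]
  refine le_trans ?_ (hfiber p _ (neg_neg _).symm (by exact_mod_cast hlarge.trans hneg))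
  push_cast
  gcongr

theorem finite_cubicSlice_inter_closedBall (s : ℤ) (B : ℝ) :
    (cubicSlice Q l E s ∩ Metric.closedBall 0 B).Finite :=
  (isCompact_closedBall 0 B).finite_of_discrete.inter_of_right _

theorem exists_eventually_mul_rpow_le_ncard_cubicSlice_inter_closedBall
    (hι : 5 ≤ Fintype.card ι) {δ : ℝ} (hδ : 0 < δ) (hQ : ∀ x, δ * ‖x‖ ^ 2 ≤ Q x)
    (hl : ∀ i, (l i).IsHomogeneous 1) (hE : E.IsHomogeneous 3)
    {z₀ : κ → ℤ} (hz₀ : eval (Option.elim' 0 z₀) E < 0) :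
    ∃ s : ℤ, ∃ c > 0, ∃ K > 0, ∀ᶠ Y : ℕ in atTop, ∀ B ≥ (1 : ℝ), K * (Y : ℝ) ^ 3 ≤ B ^ 2 →
      c * (Y : ℝ) ^ (Fintype.card κ + 3 * ((Fintype.card ι : ℝ) / 2 - 1)) ≤
        (cubicSlice Q l E s ∩ Metric.closedBall 0 B).ncard := by
  obtain ⟨s, f, hf, ε, hε, c, hc, K, hK, hfiber⟩ :=
    exists_eventually_mul_rpow_le_ncard_cubicSlice_inter_closedBall_fiber hι hδ hQ hl hE hz₀
  refine ⟨s, c * ε ^ Fintype.card κ, by positivity, K, hK, ?_⟩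
  filter_upwards [hfiber, eventually_gt_atTop 0] with Y hfiber hY B hB hYB
  refine le_of_eq_of_le ?_ (mul_pow_card_le_ncard_of_le_ncard_fiber
    (finite_cubicSlice_inter_closedBall s B) hf (by positivity) (by positivity) (hfiber B hB hYB))
  rw [Real.rpow_add (by positivity), Real.rpow_natCast, Real.rpow_mul (by positivity), mul_pow]
  norm_cast
  ring

theorem pow_card_add_card_le_ncard_cubicSlice_zero
    (hE : ∀ z : κ → ℤ, eval (Option.elim' 0 z) E = 0) {B : ℝ} (hB : 0 ≤ B) :
    B ^ (Fintype.card ι + Fintype.card κ) ≤ (cubicSlice Q l E 0 ∩ Metric.closedBall 0 B).ncard := by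
  have huniv : cubicSlice Q l E 0 = Set.univ :=
    Set.eq_univ_of_forall fun p => by
      change 0 * _ + eval (Option.elim' 0 p.2) E = 0
      rw [zero_mul, zero_add, hE]
  rw [huniv, Set.univ_inter, ← Prod.mk_zero_zero, ← closedBall_prod_same, Set.ncard_prod, pow_add]
  push_cast
  gcongr <;> exact pow_card_le_ncard_closedBall 0 hB

theorem exists_eventually_mul_rpow_le_ncard_cubicSlice (hι : 5 ≤ Fintype.card ι) {δ : ℝ}
    (hδ : 0 < δ) (hQ : ∀ x, δ * ‖x‖ ^ 2 ≤ Q x) (hl : ∀ i, (l i).IsHomogeneous 1)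
    (hE : E.IsHomogeneous 3) :
    ∃ s : ℤ, ∃ c > 0, ∀ᶠ B : ℝ in atTop,
      c * B ^ ((Fintype.card ι : ℝ) - 2 + 2 / 3 * Fintype.card κ) ≤
        (cubicSlice Q l E s ∩ Metric.closedBall 0 B).ncard := by
  by_cases hzero : ∀ z : κ → ℤ, eval (Option.elim' 0 z) E = 0
  · refine ⟨0, 1, one_pos, (eventually_ge_atTop 1).mono fun B hB => ?_⟩
    rw [one_mul]
    refine le_trans ?_ (pow_card_add_card_le_ncard_cubicSlice_zero hzero (zero_le_one.trans hB))
    rw [← Real.rpow_natCast]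
    refine Real.rpow_le_rpow_of_exponent_le hB ?_
    push_cast
    linarith [(Nat.cast_nonneg (Fintype.card κ) : (0 : ℝ) ≤ _)]
  · obtain ⟨z, hz⟩ := not_forall.mp hzero
    obtain ⟨z₀, hz₀⟩ := exists_eval_elim'_zero_neg hE hz
    obtain ⟨s, c, hc, K, hK, hcount⟩ :=
      exists_eventually_mul_rpow_le_ncard_cubicSlice_inter_closedBall hι hδ hQ hl hE hz₀
    have hr : (5 : ℝ) ≤ Fintype.card ι := by exact_mod_cast hι
    have hexp : (Fintype.card ι : ℝ) - 2 + 2 / 3 * Fintype.card κ =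
        2 / 3 * (Fintype.card κ + 3 * ((Fintype.card ι : ℝ) / 2 - 1)) := by ring
    have hcube {Y : ℕ} {B : ℝ} (hB : 1 ≤ B) (hY : Y ≤ K ^ (-(1 / 3) : ℝ) * B ^ (2 / 3 : ℝ)) :
        K * (Y : ℝ) ^ 3 ≤ B ^ 2 := by
      calc K * (Y : ℝ) ^ 3 ≤ K * (K ^ (-(1 / 3) : ℝ) * B ^ (2 / 3 : ℝ)) ^ 3 := by gcongr
        _ = B ^ 2 := by
          rw [mul_pow, ← Real.rpow_mul_natCast hK.le, ← Real.rpow_mul_natCast (by positivity)]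
          norm_num [Real.rpow_neg_one, hK.ne']
    rw [hexp]
    exact ⟨s, exists_eventually_mul_rpow_le_of_le_mul_rpow hc
      (Real.rpow_pos_of_pos hK _) (by norm_num)
      (add_nonneg (Nat.cast_nonneg _) (by linarith))
      (hcount.mono fun Y hY B hB hYB => hY B hB (hcube hB hYB))⟩

end CubicSlices

section SplitVariables

variable {r m h : ℕ}

/-- The place of the variables `y` among the variables `Option (Fin m ⊕ Fin h)` of the slices
`y₁ = s`, where `Fin m` indexes the `x_j` with `j > r`. -/
def sliceVariable (m h : ℕ) : Fin (h + 1) → Option (Fin m ⊕ Fin h) :=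
  Fin.cons none fun i => some (Sum.inr i)

/-- The part `∑_{j > r} x_j q_j(y) + R(y)` of the cubic form, in the variables of the slices
`y₁ = s`. -/
noncomputable def sliceRemainder (q : Fin (r + m) → MvPolynomial (Fin (h + 1)) ℤ)
    (R : MvPolynomial (Fin (h + 1)) ℤ) : MvPolynomial (Option (Fin m ⊕ Fin h)) ℤ :=
  ∑ j : Fin m, X (some (Sum.inl j)) * rename (sliceVariable m h) (q (Fin.natAdd r j)) +
    rename (sliceVariable m h) R

theorem isHomogeneous_sliceRemainder {q : Fin (r + m) → MvPolynomial (Fin (h + 1)) ℤ}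
    {R : MvPolynomial (Fin (h + 1)) ℤ} (hq : ∀ j, (q j).IsHomogeneous 2) (hR : R.IsHomogeneous 3) :
    (sliceRemainder q R).IsHomogeneous 3 :=
  (IsHomogeneous.sum _ _ _ fun _ _ => (isHomogeneous_X ℤ _).mul (hq _).rename_isHomogeneous).add
    hR.rename_isHomogeneous

theorem isHomogeneous_of_X_mul {σ R : Type*} [CommSemiring R] {l : MvPolynomial σ R} {i : σ} {d : ℕ}
    (h : (X i * l).IsHomogeneous (d + 1)) : l.IsHomogeneous d := by
  intro k hk
  have hcoeff : coeff (Finsupp.single i 1 + k) (X i * l) ≠ 0 := by rwa [coeff_X_mul]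
  have hdeg := h hcoeff
  rw [map_add, Finsupp.weight_single] at hdeg
  simp only [Pi.one_apply, smul_eq_mul, mul_one] at hdeg
  omega

/-- The point `(x, y)` with `y₁ = s` whose remaining coordinates are those of a point on a slice. -/
def slicePoint (s : ℤ) (p : (Fin r → ℤ) × (Fin m ⊕ Fin h → ℤ)) :
    (Fin (r + m) → ℤ) × (Fin (h + 1) → ℤ) :=
  (Fin.append p.1 fun j => p.2 (Sum.inl j), Fin.cons s fun i => p.2 (Sum.inr i))

theorem slicePoint_injective (s : ℤ) :
    Function.Injective (slicePoint s : (Fin r → ℤ) × (Fin m ⊕ Fin h → ℤ) → _) := by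
  rintro ⟨u, z⟩ ⟨u', z'⟩ hp
  obtain ⟨hx, hy⟩ := Prod.mk.inj hp
  obtain ⟨hu, hinl⟩ := Prod.mk.inj
    ((Fin.appendEquiv r m).injective (a₁ := (u, z ∘ Sum.inl)) (a₂ := (u', z' ∘ Sum.inl)) hx)
  obtain ⟨-, hinr⟩ := Fin.cons_injective2 hy
  refine Prod.ext hu (funext ?_)
  rintro (j | i)
  exacts [congrFun hinl j, congrFun hinr i]

theorem eval_elim'_rename_sliceVariable (s : ℤ) (p : (Fin r → ℤ) × (Fin m ⊕ Fin h → ℤ))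
    (G : MvPolynomial (Fin (h + 1)) ℤ) :
    eval (Option.elim' s p.2) (rename (sliceVariable m h) G) = eval (slicePoint s p).2 G := by
  rw [eval_rename]
  congr 2
  funext i
  cases i using Fin.cases <;> rfl

theorem setOf_abs_le_eq_closedBall {σ τ : Type*} [Fintype σ] [Fintype τ] {B : ℝ} (hB : 0 ≤ B) :
    {p : (σ → ℤ) × (τ → ℤ) | (∀ j, (|p.1 j| : ℝ) ≤ B) ∧ ∀ i, (|p.2 i| : ℝ) ≤ B} =
      Metric.closedBall 0 B := by
  ext p
  rw [mem_closedBall_zero_iff, Prod.norm_def, max_le_iff, pi_norm_le_iff_of_nonneg hB,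
    pi_norm_le_iff_of_nonneg hB]
  rfl

theorem norm_slicePoint_le {s : ℤ} {p : (Fin r → ℤ) × (Fin m ⊕ Fin h → ℤ)} {B : ℝ}
    (hs : ‖s‖ ≤ B) (hp : ‖p‖ ≤ B) : ‖slicePoint s p‖ ≤ B := by
  have hB : 0 ≤ B := (norm_nonneg s).trans hs
  obtain ⟨hu, hz⟩ := max_le_iff.mp hp
  refine max_le ((pi_norm_le_iff_of_nonneg hB).mpr fun j => ?_)
    ((pi_norm_le_iff_of_nonneg hB).mpr fun i => ?_)
  · cases j using Fin.addCases with
    | left i => simpa [slicePoint] using (norm_le_pi_norm p.1 i).trans hu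
    | right j => simpa [slicePoint] using (norm_le_pi_norm p.2 (Sum.inl j)).trans hz
  · cases i using Fin.cases with
    | zero => exact hs
    | succ i => exact (norm_le_pi_norm p.2 (Sum.inr i)).trans hz

theorem eval_slicePoint {F : MvPolynomial (Fin r) ℤ} {Q : QuadraticForm ℤ (Fin r → ℤ)}
    (hQ : ∀ x, Q x = eval x F) {q : Fin (r + m) → MvPolynomial (Fin (h + 1)) ℤ}
    {l : Fin r → MvPolynomial (Fin (h + 1)) ℤ} (hl : ∀ i, q (Fin.castAdd m i) = X 0 * l i)
    (R : MvPolynomial (Fin (h + 1)) ℤ) (s : ℤ) (p : (Fin r → ℤ) × (Fin m ⊕ Fin h → ℤ)) :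
    (slicePoint s p).2 0 * eval (fun i => (slicePoint s p).1 (Fin.castAdd m i)) F +
        ∑ j, (slicePoint s p).1 j * eval (slicePoint s p).2 (q j) + eval (slicePoint s p).2 R =
      s * (Q p.1 + (fun i => eval (Option.elim' s p.2) (rename (sliceVariable m h) (l i))) ⬝ᵥ p.1) +
        eval (Option.elim' s p.2) (sliceRemainder q R) := by
  simp only [sliceRemainder, map_add, map_sum, map_mul, eval_X, eval_elim'_rename_sliceVariable,
    Fin.sum_univ_add, hl, hQ, dotProduct, slicePoint, Fin.append_left, Fin.append_right,
    Fin.cons_zero, Option.elim'_some, mul_add, Finset.mul_sum, mul_left_comm (p.1 _) s,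
    mul_comm (p.1 _)]
  ring

theorem ncard_cubicSlice_inter_closedBall_le {F : MvPolynomial (Fin r) ℤ}
    {Q : QuadraticForm ℤ (Fin r → ℤ)} (hQ : ∀ x, Q x = eval x F)
    {q : Fin (r + m) → MvPolynomial (Fin (h + 1)) ℤ} {l : Fin r → MvPolynomial (Fin (h + 1)) ℤ}
    (hl : ∀ i, q (Fin.castAdd m i) = X 0 * l i) (R : MvPolynomial (Fin (h + 1)) ℤ) {s : ℤ} {B : ℝ}
    (hs : ‖s‖ ≤ B) :
    (cubicSlice Q (fun i => rename (sliceVariable m h) (l i)) (sliceRemainder q R) s ∩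
      Metric.closedBall 0 B).ncard ≤
      {p : (Fin (r + m) → ℤ) × (Fin (h + 1) → ℤ) |
        (∀ j, (|p.1 j| : ℝ) ≤ B) ∧ (∀ i, (|p.2 i| : ℝ) ≤ B) ∧
        p.2 0 * eval (fun i => p.1 (Fin.castAdd m i)) F + ∑ j, p.1 j * eval p.2 (q j) +
          eval p.2 R = 0}.ncard := by
  have hbox := setOf_abs_le_eq_closedBall (σ := Fin (r + m)) (τ := Fin (h + 1))
    ((norm_nonneg s).trans hs)
  refine Set.ncard_le_ncard_of_injOn (slicePoint s) (fun p ⟨hp, hpB⟩ => ?_)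
    (slicePoint_injective s).injOn ?_
  · obtain ⟨hx, hy⟩ := hbox.ge (mem_closedBall_zero_iff.mpr
      (norm_slicePoint_le hs (mem_closedBall_zero_iff.mp hpB)))
    exact ⟨hx, hy, (eval_slicePoint hQ hl R s p).trans hp⟩
  · exact (isCompact_closedBall 0 B).finite_of_discrete.subset fun p hp =>
      hbox.le ⟨hp.1, hp.2.1⟩

end SplitVariables

end CircleMethod

open CircleMethod Filter

/-- For `C(x,y) = y₁·F(x₁,…,x_r) + Σ x_j q_j(y) + R(y)` with `F` positive
definite of rank `5 ≤ r ≤ m` and `y₁ ∣ q_i` for `1 ≤ i ≤ r`, one has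
`N(B) ≫ B^{r-2+(2/3)(n-r-1)}`. -/
theorem stmt0 (n h m r : ℕ) (hh : 0 < h) (hhn : h < n) (hm : m = n - h)
    (hr5 : 5 ≤ r) (hrm : r ≤ m)
    (F : MvPolynomial (Fin r) ℤ) (hF2 : F.IsHomogeneous 2)
    (hFpos : ∀ v : Fin r → ℝ, v ≠ 0 → 0 < aeval v F)
    (q : Fin m → MvPolynomial (Fin h) ℤ) (hq : ∀ j, (q j).IsHomogeneous 2)
    (R : MvPolynomial (Fin h) ℤ) (hR : R.IsHomogeneous 3)
    (hdvd : ∀ i : Fin r, (X ⟨0, hh⟩ : MvPolynomial (Fin h) ℤ) ∣ q (Fin.castLE hrm i)) :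
    ∃ c > (0 : ℝ), ∃ B₀ : ℝ, ∀ B : ℝ, B₀ ≤ B →
      c * B ^ ((r : ℝ) - 2 + 2 / 3 * ((n : ℝ) - r - 1)) ≤
        (Set.ncard {p : (Fin m → ℤ) × (Fin h → ℤ) |
          (∀ j, (|p.1 j| : ℝ) ≤ B) ∧ (∀ i, (|p.2 i| : ℝ) ≤ B) ∧
          p.2 ⟨0, hh⟩ * eval (fun i : Fin r => p.1 (Fin.castLE hrm i)) F
            + ∑ j, p.1 j * eval p.2 (q j) + eval p.2 R = 0} : ℝ) := by
  obtain ⟨m', rfl⟩ := Nat.exists_eq_add_of_le hrm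
  obtain ⟨h', rfl⟩ := Nat.exists_eq_add_one.mpr hh
  obtain rfl : n = r + (m' + h') + 1 := by omega
  choose l hl using hdvd
  obtain ⟨Q, hQ⟩ := exists_quadraticForm_apply_eq_eval hF2
  obtain ⟨δ, hδ, hδQ⟩ := exists_mul_norm_sq_le_eval hF2 hFpos
  obtain ⟨s, c, hc, hcount⟩ := exists_eventually_mul_rpow_le_ncard_cubicSlice (Q := Q)
    (l := fun i => rename (sliceVariable m' h') (l i)) (by rwa [Fintype.card_fin]) hδ
    (fun x => (hδQ x).trans_eq (by rw [hQ]))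
    (fun i => (isHomogeneous_of_X_mul (hl i ▸ hq _)).rename_isHomogeneous)
    (isHomogeneous_sliceRemainder hq hR)
  obtain ⟨B₀, hB₀⟩ := eventually_atTop.mp (hcount.and (eventually_ge_atTop ‖s‖))
  refine ⟨c, hc, B₀, fun B hB => ?_⟩
  have hexp : ((r + (m' + h') + 1 : ℕ) : ℝ) - r - 1 = Fintype.card (Fin m' ⊕ Fin h') := by
    push_cast [Fintype.card_sum, Fintype.card_fin]
    ring
  obtain ⟨hle, hs⟩ := hB₀ B hB
  rw [Fintype.card_fin] at hle
  rw [hexp]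
  exact hle.trans (Nat.cast_le.mpr (ncard_cubicSlice_inter_closedBall_le hQ hl R hs))
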